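/- Let N ≥ 1 and let I_1 > L_1 > I_2 > L_2 > … > I_N > L_N > 0 be real numbers. For n = 1, …, 2N set j_{2n} := Σ_{j=1}^N 2^{−n} I_j^n (1 − L_j/I_j) ∏_{k≠j} (L_k − I_j)/(I_k − I_j). Then the infimum of M(c) over all c ∈ h^{1/2} satisfying J_{2n}(c) = j_{2n} for n = 1, …, 2N is attained, equals Σ_{m=1}^N L_m/2, and the set of minimizers is exactly the set of c ∈ h^{1/2} such that Γ_c has rank N with positive singular values exactly √(I_1/2), …, √(I_N/2), each simple, and Γ̃_c has rank N with positive singular values exactly √(L_1/2), …, √(L_N/2), each simple. -/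

import Mathlib

open scoped InnerProductSpace ComplexConjugate ENNReal

noncomputable section

/-- The Hilbert space `ℓ²(ℕ, ℂ)`. -/
abbrev L2 : Type := lp (fun _ : ℕ => ℂ) 2

/-- Membership in the space `h^{1/2}`: `c ∈ ℓ²` and `Σ n |c_n|² < ∞`. -/
def InH12 (c : ℕ → ℂ) : Prop :=
  Memℓp c 2 ∧ Summable (fun n : ℕ => (n : ℝ) * ‖c n‖ ^ 2)

/-- `Γ` is the Hankel operator of symbol `c`: `(Γ x)_n = Σ_p c_{n+p} x_p`. -/
def IsHankelOp (c : ℕ → ℂ) (Γ : L2 →L[ℂ] L2) : Prop :=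
  ∀ x : L2, ∀ n : ℕ, (Γ x : ℕ → ℂ) n = ∑' p : ℕ, c (n + p) * (x : ℕ → ℂ) p

/-- The shifted sequence `c̃ : n ↦ c_{n+1}`. -/
def shiftSeq (c : ℕ → ℂ) : ℕ → ℂ := fun n => c (n + 1)

/-- The operator `Γ Γ*`. -/
def opT (Γ : L2 →L[ℂ] L2) : L2 →L[ℂ] L2 :=
  Γ ∘L ContinuousLinearMap.adjoint Γ

/-- `e₀ = (1,0,0,…) ∈ ℓ²`. -/
def e0 : L2 := lp.single 2 0 1

/-- Generic min–max value `a_j` (for `j ≥ 1`) of a bounded operator `T` on a Hilbert space: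
the infimum over subspaces `F` of dimension at most `j-1` of the supremum of `Re ⟨T h, h⟩`
over unit vectors `h` orthogonal to `F`. -/
def minmaxVal {H : Type*} [NormedAddCommGroup H] [InnerProductSpace ℂ H]
    (T : H →L[ℂ] H) (j : ℕ) : ℝ :=
  ⨅ F : {F : Submodule ℂ H // Module.finrank ℂ F ≤ j - 1},
    ⨆ h : {h : H // ‖h‖ = 1 ∧ ∀ y ∈ F.1, ⟪y, h⟫_ℂ = 0},
      (⟪T h.1, h.1⟫_ℂ).re

/-- `λ_j(Γ)²` (for `j ≥ 1`): the `j`-th min–max value of `Γ Γ*`. -/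
def svalSq (Γ : L2 →L[ℂ] L2) (j : ℕ) : ℝ := minmaxVal (opT Γ) j

lemma summable_sq_of_memℓp {f : ℕ → ℂ} (hf : Memℓp f 2) :
    Summable fun n : ℕ => ‖f n‖ ^ 2 := by
  have h := hf.summable (p := 2) (by norm_num)
  have h2 : ((2 : ℝ≥0∞).toReal) = ((2 : ℕ) : ℝ) := by norm_num
  rw [h2] at h
  simpa [Real.rpow_natCast] using h

/-- The weighted sequence `n ↦ √(1+n) · c_n`, whose `ℓ²` norm is the `h^{1/2}` norm of `c`. -/
def wSeq (c : ℕ → ℂ) : ℕ → ℂ := fun n => (Real.sqrt (1 + (n : ℝ)) : ℂ) * c n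

lemma memℓp_wSeq {c : ℕ → ℂ} (hc : InH12 c) : Memℓp (wSeq c) 2 := by
  apply memℓp_gen
  have h2 : ((2 : ℝ≥0∞).toReal) = ((2 : ℕ) : ℝ) := by norm_num
  rw [h2]
  have hs : Summable fun n : ℕ => (1 + (n : ℝ)) * ‖c n‖ ^ 2 := by
    have := (summable_sq_of_memℓp hc.1).add hc.2
    convert this using 2 with n
    ring
  have key : ∀ n : ℕ, ‖wSeq c n‖ ^ ((2 : ℕ) : ℝ) = (1 + (n : ℝ)) * ‖c n‖ ^ 2 := by
    intro n
    rw [Real.rpow_natCast]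
    have h1 : (0 : ℝ) ≤ 1 + (n : ℝ) := by positivity
    simp only [wSeq, norm_mul, Complex.norm_real, Real.norm_eq_abs,
      abs_of_nonneg (Real.sqrt_nonneg _)]
    rw [mul_pow, Real.sq_sqrt h1]
  exact (summable_congr fun n => key n).mpr hs

/-- The space `h^{1/2}` as a type. -/
def H12 : Type := {c : ℕ → ℂ // InH12 c}

/-- The isometric embedding of `h^{1/2}` into `ℓ²` given by `c ↦ (√(1+n) c_n)_n`;
the `h^{1/2}` norm of `c` is the `ℓ²` norm of its image. -/
def H12.toL2 (c : H12) : L2 := ⟨wSeq c.1, memℓp_wSeq c.2⟩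

lemma H12.toL2_injective : Function.Injective H12.toL2 := by
  intro c d h
  apply Subtype.ext
  funext n
  have h' : wSeq c.1 n = wSeq d.1 n := congrFun (congrArg Subtype.val h) n
  have hs : (Real.sqrt (1 + (n : ℝ)) : ℂ) ≠ 0 := by
    simp only [ne_eq, Complex.ofReal_eq_zero]
    positivity
  exact mul_left_cancel₀ hs h'

/-- The metric (hence the topology) on `h^{1/2}` induced by the `h^{1/2}` norm
`(Σ (1+n)|c_n|²)^{1/2}`, obtained from the isometric embedding into `ℓ²`. -/
instance : MetricSpace H12 := MetricSpace.induced H12.toL2 H12.toL2_injective inferInstance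

/-- `Γ` has rank `N` and its positive singular values are exactly `λ_1, …, λ_N`, each simple. -/
def HasSimpleSVals (Γ : L2 →L[ℂ] L2) (N : ℕ) (lam : Fin N → ℝ) : Prop :=
  LinearMap.rank Γ.toLinearMap = N ∧
  {z : ℂ | z ≠ 0 ∧ Module.End.HasEigenvalue (opT Γ).toLinearMap z}
    = Set.range (fun j : Fin N => ((lam j : ℂ)) ^ 2) ∧
  ∀ j : Fin N,
    Module.finrank ℂ (Module.End.eigenspace (opT Γ).toLinearMap ((lam j : ℂ) ^ 2)) = 1

/-!
Writing `Γ̃` for the Hankel operator of the shifted symbol, `ΓΓ* = Γ̃Γ̃* + ⟪Γe₀, ·⟫ Γe₀` and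
`M(c)` is the squared Hilbert–Schmidt norm of `Γ̃`. Put `a = I / 2`, `b = L / 2` and
`pⱼ = Res_{x = aⱼ} ∏ₖ (x - bₖ) / (x - aₖ)`. The constraints say that the first `2N` moments of
`ΓΓ*` at `Γe₀` are those of the measure `∑ⱼ pⱼ δ_{aⱼ}`. As in Gauss quadrature, they yield
orthonormal vectors `fⱼ` such that `ΓΓ*` has the matrix `diag(a)` on the `fⱼ`, and
`Γe₀ = ∑ⱼ √pⱼ fⱼ`. Hence `‖Γ̃* fⱼ‖² = aⱼ - pⱼ`, and `∑ⱼ (aⱼ - pⱼ) = ∑ⱼ bⱼ` is a lower bound for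
`M(c)`, with equality if and only if `Γ̃*` vanishes on the orthogonal complement of the `fⱼ`. In
that case `ΓΓ*` is diagonal in the `fⱼ`, and its perturbation `Γ̃Γ̃*` has the eigenvalues `bₖ`
because `∑ⱼ pⱼ / (aⱼ - bₖ) = 1`; these equations also determine the `pⱼ`, which gives the converse.

For existence, take self-adjoint square roots `D`, `D̃` of `diag(a)` and of its rank-one
perturbation with eigenvalues `b`. The contraction `D̃ D⁻¹` has all its eigenvalues inside the unit
disc, so the space embeds isometrically into `ℓ²`, and there `D` and `D̃` become `Γ_c` and `Γ̃_c`.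
-/

section PartialFractions

open Polynomial Finset

variable {ι F : Type*} [Fintype ι] [Field F] {a b : ι → F}

theorem eq_of_sum_div_sub_eq (ha : Function.Injective a) (hb : Function.Injective b)
    (hab : ∀ j k, a j ≠ b k) {p q : ι → F}
    (h : ∀ k, ∑ j, p j / (a j - b k) = ∑ j, q j / (a j - b k)) : p = q := by
  classical
  set r : ι → F := fun j => (p j - q j) / Lagrange.nodalWeight univ a j with hr
  have hw (j : ι) : Lagrange.nodalWeight univ a j ≠ 0 :=
    Lagrange.nodalWeight_ne_zero ha.injOn (mem_univ j)
  have hzero : Lagrange.interpolate univ a r = 0 := by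
    refine eq_zero_of_degree_lt_of_eval_index_eq_zero univ hb.injOn
      (Lagrange.degree_interpolate_lt r ha.injOn) fun k _ => ?_
    rw [Lagrange.eval_interpolate_not_at_node _ fun j _ => (hab j k).symm]
    refine mul_eq_zero_of_right _ ?_
    calc ∑ j, Lagrange.nodalWeight univ a j * (b k - a j)⁻¹ * r j
        = ∑ j, q j / (a j - b k) - ∑ j, p j / (a j - b k) := by
          rw [← sum_sub_distrib]
          refine sum_congr rfl fun j _ => ?_
          have hsub := sub_ne_zero.mpr (hab j k)
          have hwj := hw j
          rw [hr, ← neg_sub (a j)]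
          field_simp
          ring
      _ = 0 := by rw [h k, sub_self]
  funext j
  have hj : r j = 0 := by
    rw [← Lagrange.eval_interpolate_at_node r ha.injOn (mem_univ j), hzero, eval_zero]
  exact sub_eq_zero.mp ((div_eq_zero_iff.mp hj).resolve_right (hw j))

variable [DecidableEq ι]

/-- The residue at `a j` of the rational function `∏ₖ (x - b k) / ∏ₖ (x - a k)`. -/
def residueWeight (a b : ι → F) (j : ι) : F :=
  eval (a j) (Lagrange.nodal univ b) * Lagrange.nodalWeight univ a j

theorem residueWeight_eq_mul_prod_erase (a b : ι → F) (j : ι) :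
    residueWeight a b j = (a j - b j) * ∏ k ∈ univ.erase j, (b k - a j) / (a k - a j) := by
  rw [residueWeight, Lagrange.eval_nodal, Lagrange.nodalWeight, ← mul_prod_erase _ _ (mem_univ j),
    mul_assoc, ← prod_mul_distrib]
  congr 1
  refine prod_congr rfl fun k _ => ?_
  rw [← div_eq_mul_inv, ← neg_sub (b k), ← neg_sub (a k), neg_div_neg_eq]

theorem interpolate_eval_nodal (ha : Function.Injective a) :
    Lagrange.interpolate univ a (fun j => eval (a j) (Lagrange.nodal univ b)) =
      Lagrange.nodal univ b - Lagrange.nodal univ a := by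
  have hdeg : (Lagrange.nodal univ b - Lagrange.nodal univ a).degree < #(univ : Finset ι) := by
    rw [← Lagrange.degree_nodal (s := univ) (v := b)]
    exact degree_sub_lt_left (by rw [Lagrange.degree_nodal, Lagrange.degree_nodal])
      Lagrange.nodal_ne_zero
      (by rw [Lagrange.nodal_monic.leadingCoeff, Lagrange.nodal_monic.leadingCoeff])
  refine (Lagrange.eq_interpolate_of_eval_eq _ ha.injOn hdeg fun j hj => ?_).symm
  rw [eval_sub, Lagrange.eval_nodal_at_node hj, sub_zero]

theorem sum_residueWeight_div_sub (ha : Function.Injective a) (hab : ∀ j k, a j ≠ b k) (k : ι) :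
    ∑ j, residueWeight a b j / (a j - b k) = 1 := by
  have hne : eval (b k) (Lagrange.nodal univ a) ≠ 0 :=
    Lagrange.eval_nodal_not_at_node fun j _ => (hab j k).symm
  have hev := congrArg (eval (b k)) (interpolate_eval_nodal (b := b) ha)
  rw [Lagrange.eval_interpolate_not_at_node _ fun j _ => (hab j k).symm, eval_sub,
    Lagrange.eval_nodal_at_node (mem_univ k), zero_sub, ← mul_neg_one] at hev
  rw [← neg_eq_iff_eq_neg.mpr (mul_left_cancel₀ hne hev), ← sum_neg_distrib]
  refine sum_congr rfl fun j _ => ?_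
  rw [residueWeight, ← neg_sub (b k), div_neg, div_eq_mul_inv]
  ring

theorem sum_residueWeight (ha : Function.Injective a) :
    ∑ j, residueWeight a b j = ∑ j, a j - ∑ j, b j := by
  rcases isEmpty_or_nonempty ι with _ | _
  · simp
  have hcard : 0 < #(univ : Finset ι) := card_pos.mpr univ_nonempty
  have hcoeff (v : ι → F) : (Lagrange.nodal univ v).coeff (#(univ : Finset ι) - 1) = -∑ j, v j :=
    prod_X_sub_C_coeff_card_pred univ v hcard
  have h := congrArg (coeff · (#(univ : Finset ι) - 1)) (interpolate_eval_nodal (b := b) ha)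
  simp only [coeff_sub, hcoeff] at h
  rw [Lagrange.coeff_eq_sum ha.injOn (Lagrange.degree_interpolate_lt _ ha.injOn)] at h
  simp only [Lagrange.eval_interpolate_at_node _ ha.injOn (mem_univ _)] at h
  calc ∑ j, residueWeight a b j
      = ∑ j, eval (a j) (Lagrange.nodal univ b) / ∏ k ∈ univ.erase j, (a j - a k) :=
        sum_congr rfl fun j _ => by
          rw [residueWeight, Lagrange.nodalWeight, prod_inv_distrib, div_eq_mul_inv]
    _ = ∑ j, a j - ∑ j, b j := by rw [h]; ring

end PartialFractions

/-- The strict interlacing `a 0 > b 0 > a 1 > b 1 > ⋯ > 0`. -/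
structure Interlacing {N : ℕ} (a b : Fin N → ℝ) : Prop where
  lt : ∀ j, b j < a j
  succ_lt : ∀ j k : Fin N, (j : ℕ) + 1 = k → a k < b j
  pos_right : ∀ j, 0 < b j

namespace Interlacing

variable {N : ℕ} {a b : Fin N → ℝ}

theorem lt_of_lt (h : Interlacing a b) {j k : Fin N} (hjk : j < k) : a k < b j := by
  obtain ⟨k, hk⟩ := k
  induction k with
  | zero => exact absurd hjk (Nat.not_lt_zero _)
  | succ k ih =>
    rcases (Nat.lt_succ_iff.mp hjk : (j : ℕ) ≤ k).eq_or_lt with heq | hlt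
    · exact h.succ_lt j _ (congrArg Nat.succ heq)
    · have hk' : k < N := Nat.lt_of_succ_lt hk
      calc a ⟨k + 1, hk⟩ < b ⟨k, hk'⟩ := h.succ_lt _ _ rfl
        _ < a ⟨k, hk'⟩ := h.lt _
        _ < b j := ih hk' hlt

theorem pos_left (h : Interlacing a b) (j : Fin N) : 0 < a j :=
  (h.pos_right j).trans (h.lt j)

theorem strictAnti_left (h : Interlacing a b) : StrictAnti a := fun j _ hjk =>
  (h.lt_of_lt hjk).trans (h.lt j)

theorem strictAnti_right (h : Interlacing a b) : StrictAnti b := fun _ k hjk =>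
  (h.lt k).trans (h.lt_of_lt hjk)

theorem ne (h : Interlacing a b) (j k : Fin N) : a j ≠ b k := by
  rcases lt_or_ge k j with hkj | hjk
  · exact (h.lt_of_lt hkj).ne
  · exact ((h.strictAnti_right.antitone hjk).trans_lt (h.lt j)).ne'

theorem residueWeight_pos (h : Interlacing a b) (j : Fin N) : 0 < residueWeight a b j := by
  rw [residueWeight_eq_mul_prod_erase]
  refine mul_pos (sub_pos.mpr (h.lt j)) (Finset.prod_pos fun k hk => ?_)
  rcases (Finset.ne_of_mem_erase hk).lt_or_gt with hkj | hjk
  · exact div_pos (sub_pos.mpr (h.lt_of_lt hkj)) (sub_pos.mpr (h.strictAnti_left hkj))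
  · exact div_pos_of_neg_of_neg (sub_neg.mpr ((h.lt k).trans (h.strictAnti_left hjk)))
      (sub_neg.mpr (h.strictAnti_left hjk))

end Interlacing

section DiagonalOperators

open InnerProductSpace (rankOne)

variable {ι H : Type*} [NormedAddCommGroup H] [InnerProductSpace ℂ H]
  {f g : ι → H} {s t a b : ι → ℝ}

theorem exists_orthonormal_eigenvectors {T : H →L[ℂ] H} (hT : T.IsSymmetric)
    (ht : Function.Injective t)
    (h : ∀ j, Module.End.HasEigenvalue (T : Module.End ℂ H) (t j : ℂ)) :
    ∃ f : ι → H, Orthonormal ℂ f ∧ ∀ j, T (f j) = (t j : ℂ) • f j := by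
  choose v hv using fun j => (h j).exists_hasEigenvector
  have hunit (j : ι) : ((‖v j‖⁻¹ : ℝ) : ℂ) • v j ∈
      Module.End.eigenspace (T : Module.End ℂ H) (t j : ℂ) :=
    Submodule.smul_mem _ _ (hv j).1
  refine ⟨fun j => ((‖v j‖⁻¹ : ℝ) : ℂ) • v j, ⟨fun j => ?_, fun j k hjk => ?_⟩, fun j =>
    Module.End.mem_eigenspace_iff.mp (hunit j)⟩
  · rw [norm_smul, Complex.norm_real, norm_inv, norm_norm,
      inv_mul_cancel₀ (norm_ne_zero_iff.mpr (hv j).2)]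
  · have hne : (t j : ℂ) ≠ t k := fun heq => hjk (ht (Complex.ofReal_injective heq))
    exact hT.orthogonalFamily_eigenspaces hne ⟨_, hunit j⟩ ⟨_, hunit k⟩

theorem mem_span_of_forall_inner_eq_zero [Finite ι] {x : H}
    (hx : ∀ y, (∀ j, ⟪f j, y⟫_ℂ = 0) → ⟪y, x⟫_ℂ = 0) :
    x ∈ Submodule.span ℂ (Set.range f) := by
  have := FiniteDimensional.span_of_finite ℂ (Set.finite_range f)
  rw [← Submodule.orthogonal_orthogonal (Submodule.span ℂ (Set.range f))]
  exact fun y hy => hx y fun j => hy _ (Submodule.subset_span (Set.mem_range_self j))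

variable [Fintype ι]

/-- The finite-rank operator `∑ⱼ tⱼ ⟪fⱼ, ·⟫ fⱼ`; for an orthonormal family `f` it is the operator
with eigenvectors `fⱼ` and eigenvalues `tⱼ` that vanishes on the orthogonal complement of `f`. -/
def diagOp (f : ι → H) (t : ι → ℝ) : H →L[ℂ] H :=
  ∑ j, (t j : ℂ) • rankOne ℂ (f j) (f j)

theorem diagOp_apply (f : ι → H) (t : ι → ℝ) (x : H) :
    diagOp f t x = ∑ j, ((t j : ℂ) * ⟪f j, x⟫_ℂ) • f j := by
  simp only [diagOp, sum_apply, smul_apply, InnerProductSpace.rankOne_apply, smul_smul]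

theorem diagOp_apply_eq_zero {x : H} (hx : ∀ j, ⟪f j, x⟫_ℂ = 0) : diagOp f t x = 0 := by
  simp [diagOp_apply, hx]

theorem diagOp_apply_mem_span (x : H) : diagOp f t x ∈ Submodule.span ℂ (Set.range f) := by
  rw [diagOp_apply]
  exact Submodule.sum_mem _ fun j _ =>
    Submodule.smul_mem _ _ (Submodule.subset_span (Set.mem_range_self j))

theorem isSymmetric_diagOp (f : ι → H) (t : ι → ℝ) : (diagOp f t).IsSymmetric := fun x y => by
  simp only [ContinuousLinearMap.coe_coe, diagOp_apply, sum_inner, inner_sum, inner_smul_left,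
    inner_smul_right, map_mul, Complex.conj_ofReal, inner_conj_symm]
  exact Finset.sum_congr rfl fun j _ => by ring

theorem inner_diagOp (hf : Orthonormal ℂ f) (k : ι) (x : H) :
    ⟪f k, diagOp f t x⟫_ℂ = t k * ⟪f k, x⟫_ℂ := by
  rw [diagOp_apply, hf.inner_right_fintype]

theorem inner_diagOp_pow (hf : Orthonormal ℂ f) (k : ι) (x : H) (n : ℕ) :
    ⟪f k, (diagOp f t ^ n) x⟫_ℂ = (t k : ℂ) ^ n * ⟪f k, x⟫_ℂ := by
  induction n with
  | zero => simp
  | succ n ih =>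
    rw [pow_succ', mul_apply_eq_comp, inner_diagOp hf, ih, pow_succ', mul_assoc]

theorem diagOp_apply_self (hf : Orthonormal ℂ f) (k : ι) :
    diagOp f t (f k) = (t k : ℂ) • f k := by
  classical
  rw [diagOp_apply]
  simp [orthonormal_iff_ite.mp hf]

theorem diagOp_mul_diagOp (hf : Orthonormal ℂ f) (s t : ι → ℝ) :
    diagOp f s * diagOp f t = diagOp f (s * t) := by
  ext x
  rw [mul_apply_eq_comp, diagOp_apply f s, diagOp_apply f (s * t)]
  simp [inner_diagOp hf, mul_assoc]

theorem diagOp_one (e : OrthonormalBasis ι ℂ H) : diagOp e (1 : ι → ℝ) = 1 := by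
  ext1 x
  simp [diagOp_apply, e.sum_repr']

theorem diagOp_sqrt_mul_self (hf : Orthonormal ℂ f) (ht : ∀ j, 0 ≤ t j) :
    diagOp f (fun j => √(t j)) * diagOp f (fun j => √(t j)) = diagOp f t := by
  rw [diagOp_mul_diagOp hf]
  exact congrArg (diagOp f) (funext fun j => Real.mul_self_sqrt (ht j))

/-- For an orthonormal basis `e` and positive `t`, the operator `diagOp e √t` as a unit, with
inverse `diagOp e (1 / √t)`. -/
def diagOpSqrtUnit (e : OrthonormalBasis ι ℂ H) (ht : ∀ j, 0 < t j) : (H →L[ℂ] H)ˣ where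
  val := diagOp e fun j => √(t j)
  inv := diagOp e fun j => (√(t j))⁻¹
  val_inv := by
    rw [diagOp_mul_diagOp e.orthonormal, ← diagOp_one e]
    exact congrArg (diagOp e) (funext fun j => mul_inv_cancel₀ (Real.sqrt_pos.mpr (ht j)).ne')
  inv_val := by
    rw [diagOp_mul_diagOp e.orthonormal, ← diagOp_one e]
    exact congrArg (diagOp e) (funext fun j => inv_mul_cancel₀ (Real.sqrt_pos.mpr (ht j)).ne')

theorem mem_span_of_eq_sum_smul {x : H} {r : ι → ℂ} (h : x = ∑ j, r j • f j) :
    x ∈ Submodule.span ℂ (Set.range f) :=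
  (Submodule.mem_span_range_iff_exists_fun ℂ).mpr ⟨r, h.symm⟩

theorem norm_inner_sq_of_eq_sum_sqrt (hf : Orthonormal ℂ f) (ht : ∀ j, 0 ≤ t j) {x : H}
    (h : x = ∑ j, (√(t j) : ℂ) • f j) (j : ι) : ‖⟪f j, x⟫_ℂ‖ ^ 2 = t j := by
  rw [h, hf.inner_right_fintype, Complex.norm_real, Real.norm_eq_abs, sq_abs,
    Real.sq_sqrt (ht j)]

theorem sum_inner_smul_of_mem_span (hf : Orthonormal ℂ f) {x : H}
    (hx : x ∈ Submodule.span ℂ (Set.range f)) : ∑ j, ⟪f j, x⟫_ℂ • f j = x := by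
  obtain ⟨d, rfl⟩ := (Submodule.mem_span_range_iff_exists_fun ℂ).mp hx
  simp [hf.inner_right_fintype]

theorem inner_sub_sum_inner_smul_eq_zero (hf : Orthonormal ℂ f) (k : ι) (x : H) :
    ⟪f k, x - ∑ j, ⟪f j, x⟫_ℂ • f j⟫_ℂ = 0 := by
  rw [inner_sub_right, hf.inner_right_fintype, sub_self]

theorem inner_eq_sum_of_mem_span (hf : Orthonormal ℂ f) {x : H}
    (hx : x ∈ Submodule.span ℂ (Set.range f)) (y : H) :
    ⟪x, y⟫_ℂ = ∑ j, ⟪x, f j⟫_ℂ * ⟪f j, y⟫_ℂ := by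
  conv_lhs => rw [← sum_inner_smul_of_mem_span hf hx]
  simp only [sum_inner, inner_smul_left, inner_conj_symm]

theorem inner_diagOp_pow_self (hf : Orthonormal ℂ f) {x : H}
    (hx : x ∈ Submodule.span ℂ (Set.range f)) (n : ℕ) :
    ⟪x, (diagOp f t ^ n) x⟫_ℂ = ((∑ j, ‖⟪f j, x⟫_ℂ‖ ^ 2 * t j ^ n : ℝ) : ℂ) := by
  rw [inner_eq_sum_of_mem_span hf hx]
  simp only [Complex.ofReal_sum, Complex.ofReal_mul, Complex.ofReal_pow]
  refine Finset.sum_congr rfl fun j _ => ?_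
  rw [inner_diagOp_pow hf, ← Complex.mul_conj', inner_conj_symm]
  ring

theorem eq_diagOp (hf : Orthonormal ℂ f) {T : H →L[ℂ] H}
    (hT : ∀ j, T (f j) = (t j : ℂ) • f j) (h0 : ∀ y, (∀ j, ⟪f j, y⟫_ℂ = 0) → T y = 0) :
    T = diagOp f t := by
  ext x
  have hperp : T (x - ∑ j, ⟪f j, x⟫_ℂ • f j) = 0 := h0 _ fun k =>
    inner_sub_sum_inner_smul_eq_zero hf k x
  rw [map_sub, sub_eq_zero] at hperp
  simp only [hperp, map_sum, map_smul, hT, diagOp_apply, smul_smul, mul_comm]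

theorem eq_diagOp_of_inner_eq [DecidableEq ι] (hf : Orthonormal ℂ f) {T : H →L[ℂ] H}
    (hsymm : T.IsSymmetric) (hT : ∀ j k, ⟪f j, T (f k)⟫_ℂ = if j = k then (t j : ℂ) else 0)
    (h0 : ∀ y, (∀ j, ⟪f j, y⟫_ℂ = 0) → T y = 0) : T = diagOp f t := by
  refine eq_diagOp hf (fun k => sub_eq_zero.mp ?_) h0
  set z := T (f k) - (t k : ℂ) • f k with hz
  have hperp (j : ι) : ⟪f j, z⟫_ℂ = 0 := by
    rw [hz, inner_sub_right, hT, inner_smul_right, orthonormal_iff_ite.mp hf]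
    split_ifs with hjk <;> simp [*]
  rw [← inner_self_eq_zero (𝕜 := ℂ)]
  calc ⟪z, z⟫_ℂ = ⟪T z, f k⟫_ℂ - t k * ⟪z, f k⟫_ℂ := by
        conv_lhs => rw [hz, inner_sub_right, inner_smul_right, ← hz]
        rw [← ContinuousLinearMap.coe_coe T, hsymm z (f k)]
    _ = 0 := by rw [h0 z hperp, inner_zero_left, ← inner_conj_symm, hperp k]; simp

theorem eq_zero_of_forall_inner_diagOp_pow_eq_zero {N : ℕ} {t : Fin N → ℝ}
    (e : OrthonormalBasis (Fin N) ℂ H) (ht : Function.Injective t) {x z : H}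
    (hx : ∀ j, ⟪e j, x⟫_ℂ ≠ 0) (hz : ∀ n, ⟪x, (diagOp e t ^ n) z⟫_ℂ = 0) : z = 0 := by
  have hcoord : (fun j => ⟪x, e j⟫_ℂ * ⟪e j, z⟫_ℂ) = 0 :=
    Matrix.eq_zero_of_forall_pow_sum_mul_pow_eq_zero
      (f := fun j => (t j : ℂ)) (Complex.ofReal_injective.comp ht) fun n => by
        rw [← hz n, ← e.sum_inner_mul_inner]
        refine Finset.sum_congr rfl fun j _ => ?_
        rw [inner_diagOp_pow e.orthonormal]
        ring
  rw [← e.sum_repr' z]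
  refine Finset.sum_eq_zero fun j _ => ?_
  have hne : ⟪x, e j⟫_ℂ ≠ 0 := inner_eq_zero_symm.not.mp (hx j)
  rw [(mul_eq_zero.mp (congrFun hcoord j)).resolve_left hne, zero_smul]

theorem eigenspace_diagOp_eq_span_singleton (hf : Orthonormal ℂ f)
    (ht : Function.Injective t) (ht0 : ∀ j, t j ≠ 0) (j : ι) :
    Module.End.eigenspace (diagOp f t).toLinearMap (t j : ℂ) = Submodule.span ℂ {f j} := by
  refine le_antisymm (fun x hx => ?_) ?_
  · have hx' : diagOp f t x = (t j : ℂ) • x := Module.End.mem_eigenspace_iff.mp hx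
    have hcoord (k : ι) (hk : k ≠ j) : ⟪f k, x⟫_ℂ = 0 := by
      have hkx := congrArg (inner ℂ (f k)) hx'
      rw [inner_diagOp hf, inner_smul_right] at hkx
      exact (mul_eq_mul_right_iff.mp hkx).resolve_left
        fun heq => hk (ht (Complex.ofReal_injective heq))
    rw [← inv_smul_smul₀ (Complex.ofReal_ne_zero.mpr (ht0 j)) x, ← hx', diagOp_apply,
      Finset.sum_eq_single j (fun k _ hk => by rw [hcoord k hk, mul_zero, zero_smul]) (by simp)]
    exact Submodule.smul_mem _ _ (Submodule.smul_mem _ _ (Submodule.mem_span_singleton_self _))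
  · rw [Submodule.span_singleton_le_iff_mem, Module.End.mem_eigenspace_iff]
    exact diagOp_apply_self hf j

theorem hasEigenvalue_diagOp_iff (hf : Orthonormal ℂ f) {z : ℂ} (hz : z ≠ 0) :
    Module.End.HasEigenvalue (diagOp f t).toLinearMap z ↔ ∃ j, (t j : ℂ) = z := by
  constructor
  · intro h
    obtain ⟨x, hx, hx0⟩ := h.exists_hasEigenvector
    have hx' : diagOp f t x = z • x := Module.End.mem_eigenspace_iff.mp hx
    by_contra! hne
    have hcoord (k : ι) : ⟪f k, x⟫_ℂ = 0 := by
      have hkx := congrArg (inner ℂ (f k)) hx'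
      rw [inner_diagOp hf, inner_smul_right] at hkx
      exact (mul_eq_mul_right_iff.mp hkx).resolve_left (hne k)
    rw [diagOp_apply_eq_zero hcoord, eq_comm, smul_eq_zero] at hx'
    exact hx'.elim hz hx0
  · rintro ⟨j, rfl⟩
    exact Module.End.hasEigenvalue_of_hasEigenvector
      ⟨Module.End.mem_eigenspace_iff.mpr (diagOp_apply_self hf j), hf.ne_zero j⟩

theorem hasEigenvalue_diagOp_sub_rankOne (hf : Orthonormal ℂ f) {c : H}
    (hc : c ∈ Submodule.span ℂ (Set.range f)) {x : ℝ} (hx : ∀ j, a j ≠ x)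
    (hsum : ∑ j, ‖⟪f j, c⟫_ℂ‖ ^ 2 / (a j - x) = 1) :
    Module.End.HasEigenvalue (diagOp f a - rankOne ℂ c c : H →L[ℂ] H).toLinearMap (x : ℂ) := by
  set v : H := ∑ j, (⟪f j, c⟫_ℂ / ((a j - x : ℝ) : ℂ)) • f j with hv
  have hcv : ⟪c, v⟫_ℂ = 1 := by
    rw [hv, inner_sum, ← Complex.ofReal_one, ← hsum]
    push_cast
    refine Finset.sum_congr rfl fun j _ => ?_
    rw [inner_smul_right, ← Complex.mul_conj', inner_conj_symm]
    ring
  refine Module.End.hasEigenvalue_of_hasEigenvector (x := v)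
    ⟨Module.End.mem_eigenspace_iff.mpr ?_, fun hv0 => by simp [hv0] at hcv⟩
  change diagOp f a v - rankOne ℂ c c v = (x : ℂ) • v
  have hfv (j : ι) : ⟪f j, v⟫_ℂ = ⟪f j, c⟫_ℂ / ((a j - x : ℝ) : ℂ) := hf.inner_right_fintype _ j
  rw [InnerProductSpace.rankOne_apply, hcv, one_smul, sub_eq_iff_eq_add, diagOp_apply]
  conv_rhs => rw [← sum_inner_smul_of_mem_span hf hc, hv, Finset.smul_sum]
  rw [← Finset.sum_add_distrib]
  refine Finset.sum_congr rfl fun j _ => ?_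
  have hne : ((a j - x : ℝ) : ℂ) ≠ 0 := Complex.ofReal_ne_zero.mpr (sub_ne_zero.mpr (hx j))
  rw [hfv, smul_smul, ← add_smul]
  congr 1
  field_simp
  push_cast
  ring

theorem exists_diagOp_eq_add_rankOne (hf : Orthonormal ℂ f) {c : H}
    (hc : c ∈ Submodule.span ℂ (Set.range f)) (hb : Function.Injective b) (hb0 : ∀ k, b k ≠ 0)
    (hab : ∀ j k, a j ≠ b k) (hsum : ∀ k, ∑ j, ‖⟪f j, c⟫_ℂ‖ ^ 2 / (a j - b k) = 1) :
    ∃ g : ι → H, Orthonormal ℂ g ∧ diagOp f a = diagOp g b + rankOne ℂ c c := by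
  set T : H →L[ℂ] H := diagOp f a - rankOne ℂ c c
  have hsymm : T.IsSymmetric := (isSymmetric_diagOp f a).sub
    (InnerProductSpace.isSymmetric_rankOne_self c)
  obtain ⟨g, hg, hTg⟩ := exists_orthonormal_eigenvectors hsymm hb fun k =>
    hasEigenvalue_diagOp_sub_rankOne hf hc (hab · k) (hsum k)
  have hT_mem (x : H) : T x ∈ Submodule.span ℂ (Set.range f) :=
    Submodule.sub_mem _ (diagOp_apply_mem_span x) (Submodule.smul_mem _ _ hc)
  have hg_mem (k : ι) : g k ∈ Submodule.span ℂ (Set.range f) := by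
    rw [← inv_smul_smul₀ (Complex.ofReal_ne_zero.mpr (hb0 k)) (g k), ← hTg]
    exact Submodule.smul_mem _ _ (hT_mem _)
  have := FiniteDimensional.span_of_finite ℂ (Set.finite_range f)
  have hspan : Submodule.span ℂ (Set.range g) = Submodule.span ℂ (Set.range f) :=
    Submodule.eq_of_le_of_finrank_eq (Submodule.span_le.mpr (Set.range_subset_iff.mpr hg_mem))
      (by rw [finrank_span_eq_card hf.linearIndependent, finrank_span_eq_card hg.linearIndependent])
  refine ⟨g, hg, sub_eq_iff_eq_add.mp (eq_diagOp hg hTg fun y hy => ?_)⟩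
  have hperp {x : H} (hx : x ∈ Submodule.span ℂ (Set.range f)) : ⟪x, y⟫_ℂ = 0 := by
    rw [inner_eq_sum_of_mem_span hg (hspan ▸ hx)]
    simp [hy]
  rw [sub_apply, InnerProductSpace.rankOne_apply, hperp hc, zero_smul, sub_zero,
    diagOp_apply_eq_zero fun j => hperp (Submodule.subset_span (Set.mem_range_self j))]

theorem Interlacing.exists_diagOp_eq_add_rankOne {N : ℕ} {a b : Fin N → ℝ}
    (hab : Interlacing a b) {f : Fin N → H} (hf : Orthonormal ℂ f) {c : H}
    (hc : c = ∑ j, (√(residueWeight a b j) : ℂ) • f j) :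
    ∃ g : Fin N → H, Orthonormal ℂ g ∧ diagOp f a = diagOp g b + rankOne ℂ c c :=
  _root_.exists_diagOp_eq_add_rankOne hf (mem_span_of_eq_sum_smul hc)
    hab.strictAnti_right.injective (fun k => (hab.pos_right k).ne') hab.ne fun k => by
      simpa only [norm_inner_sq_of_eq_sum_sqrt hf (fun j => (hab.residueWeight_pos j).le) hc] using
        sum_residueWeight_div_sub hab.strictAnti_left.injective hab.ne k

theorem sum_norm_inner_sq_div_sub_eq_one (hf : Orthonormal ℂ f) (hg : Orthonormal ℂ g) {c : H}
    (hc : c ∈ Submodule.span ℂ (Set.range f)) (h : diagOp f a = diagOp g b + rankOne ℂ c c)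
    {k : ι} (hb0 : b k ≠ 0) (hab : ∀ j, a j ≠ b k) :
    ∑ j, ‖⟪f j, c⟫_ℂ‖ ^ 2 / (a j - b k) = 1 := by
  have hne (j : ι) : ((a j - b k : ℝ) : ℂ) ≠ 0 :=
    Complex.ofReal_ne_zero.mpr (sub_ne_zero.mpr (hab j))
  have happly : diagOp f a (g k) = (b k : ℂ) • g k + ⟪c, g k⟫_ℂ • c := by
    rw [h, add_apply, diagOp_apply_self hg, InnerProductSpace.rankOne_apply]
  have hcoord (j : ι) : ⟪f j, g k⟫_ℂ = ⟪c, g k⟫_ℂ * (⟪f j, c⟫_ℂ / ((a j - b k : ℝ) : ℂ)) := by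
    have hj := congrArg (inner ℂ (f j)) happly
    rw [inner_diagOp hf, inner_add_right, inner_smul_right, inner_smul_right] at hj
    have := hne j
    field_simp
    push_cast
    linear_combination hj
  have hcg : ⟪c, g k⟫_ℂ ≠ 0 := fun h0 => by
    rw [diagOp_apply_eq_zero fun j => by rw [hcoord, h0, zero_mul], h0, zero_smul, add_zero,
      eq_comm, smul_eq_zero] at happly
    exact happly.elim (Complex.ofReal_ne_zero.mpr hb0) (hg.ne_zero k)
  have hself : ⟪c, g k⟫_ℂ = ⟪c, g k⟫_ℂ * ((∑ j, ‖⟪f j, c⟫_ℂ‖ ^ 2 / (a j - b k) : ℝ) : ℂ) := by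
    conv_lhs => rw [inner_eq_sum_of_mem_span hf hc]
    push_cast
    rw [Finset.mul_sum]
    refine Finset.sum_congr rfl fun j _ => ?_
    rw [hcoord, ← Complex.mul_conj', inner_conj_symm]
    push_cast
    ring
  exact_mod_cast (mul_eq_left₀ hcg).mp hself.symm

end DiagonalOperators

section SimpleSingularValues

theorem isSymmetric_opT (Γ : L2 →L[ℂ] L2) : (opT Γ).IsSymmetric := fun x y => by
  simp [opT, ← ContinuousLinearMap.adjoint_inner_left]

theorem inner_opT_self (Γ : L2 →L[ℂ] L2) (x : L2) :
    ⟪x, opT Γ x⟫_ℂ = ((‖ContinuousLinearMap.adjoint Γ x‖ ^ 2 : ℝ) : ℂ) := by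
  rw [opT, ContinuousLinearMap.comp_apply, ← ContinuousLinearMap.adjoint_inner_left,
    inner_self_eq_norm_sq_to_K]
  simp

theorem opT_apply_eq_zero_iff {Γ : L2 →L[ℂ] L2} {x : L2} :
    opT Γ x = 0 ↔ ContinuousLinearMap.adjoint Γ x = 0 := by
  refine ⟨fun h => ?_, fun h => by rw [opT, ContinuousLinearMap.comp_apply, h, map_zero]⟩
  have h0 := inner_opT_self Γ x
  rw [h, inner_zero_right, eq_comm, Complex.ofReal_eq_zero] at h0
  exact norm_eq_zero.mp (pow_eq_zero_iff two_ne_zero |>.mp h0)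

variable {Γ : L2 →L[ℂ] L2} {N : ℕ} {f : Fin N → L2} {t : Fin N → ℝ}

theorem apply_mem_span_of_opT_eq_diagOp (h : opT Γ = diagOp f t) (x : L2) :
    Γ x ∈ Submodule.span ℂ (Set.range f) := by
  refine mem_span_of_forall_inner_eq_zero fun y hy => ?_
  have hadj : ContinuousLinearMap.adjoint Γ y = 0 := by
    rw [← opT_apply_eq_zero_iff, h, diagOp_apply_eq_zero hy]
  rw [← ContinuousLinearMap.adjoint_inner_left, hadj, inner_zero_left]

theorem mem_range_of_opT_apply_eq (ht : ∀ j, 0 < t j)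
    (h : ∀ j, opT Γ (f j) = (t j : ℂ) • f j) (j : Fin N) : f j ∈ LinearMap.range Γ.toLinearMap := by
  refine ⟨(t j : ℂ)⁻¹ • ContinuousLinearMap.adjoint Γ (f j), ?_⟩
  rw [map_smul]
  change (t j : ℂ)⁻¹ • opT Γ (f j) = f j
  rw [h, inv_smul_smul₀ (Complex.ofReal_ne_zero.mpr (ht j).ne')]

theorem HasSimpleSVals.of_opT_eq_diagOp (ht : Function.Injective t) (ht0 : ∀ j, 0 < t j)
    (hf : Orthonormal ℂ f) (h : opT Γ = diagOp f t) :
    HasSimpleSVals Γ N fun j => √(t j) := by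
  have hsq (j : Fin N) : ((√(t j) : ℝ) : ℂ) ^ 2 = t j := by
    rw [← Complex.ofReal_pow, Real.sq_sqrt (ht0 j).le]
  have hrange : LinearMap.range Γ.toLinearMap = Submodule.span ℂ (Set.range f) := by
    refine le_antisymm ?_ (Submodule.span_le.mpr (Set.range_subset_iff.mpr
      (mem_range_of_opT_apply_eq ht0 fun j => by rw [h, diagOp_apply_self hf])))
    rintro _ ⟨x, rfl⟩
    exact apply_mem_span_of_opT_eq_diagOp h x
  refine ⟨?_, ?_, fun j => ?_⟩
  · rw [LinearMap.rank, hrange, rank_span hf.linearIndependent,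
      Cardinal.mk_range_eq f hf.linearIndependent.injective, Cardinal.mk_fin]
  · ext z
    simp only [hsq, h, Set.mem_range]
    constructor
    · rintro ⟨hz, hev⟩
      exact (hasEigenvalue_diagOp_iff hf hz).mp hev
    · rintro ⟨j, rfl⟩
      have hj : (t j : ℂ) ≠ 0 := Complex.ofReal_ne_zero.mpr (ht0 j).ne'
      exact ⟨hj, (hasEigenvalue_diagOp_iff hf hj).mpr ⟨j, rfl⟩⟩
  · rw [hsq, h, eigenspace_diagOp_eq_span_singleton hf ht (fun j => (ht0 j).ne'),
      finrank_span_singleton (hf.ne_zero j)]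

theorem HasSimpleSVals.exists_opT_eq_diagOp (ht : Function.Injective t) (ht0 : ∀ j, 0 < t j)
    (h : HasSimpleSVals Γ N fun j => √(t j)) :
    ∃ f : Fin N → L2, Orthonormal ℂ f ∧ opT Γ = diagOp f t := by
  have hev (j : Fin N) : Module.End.HasEigenvalue (opT Γ).toLinearMap (t j : ℂ) := by
    have hmem : ((√(t j) : ℝ) : ℂ) ^ 2 ∈
      {z : ℂ | z ≠ 0 ∧ Module.End.HasEigenvalue (opT Γ).toLinearMap z} := h.2.1 ▸ ⟨j, rfl⟩
    rw [← Complex.ofReal_pow, Real.sq_sqrt (ht0 j).le] at hmem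
    exact hmem.2
  obtain ⟨f, hf, hTf⟩ := exists_orthonormal_eigenvectors (isSymmetric_opT Γ) ht hev
  have hfin : Module.Finite ℂ (LinearMap.range Γ.toLinearMap) :=
    Module.rank_lt_aleph0_iff.mp (h.1.trans_lt (Cardinal.natCast_lt_aleph0))
  have hrange : Submodule.span ℂ (Set.range f) = LinearMap.range Γ.toLinearMap :=
    Submodule.eq_of_le_of_finrank_eq (Submodule.span_le.mpr (Set.range_subset_iff.mpr
      (mem_range_of_opT_apply_eq ht0 hTf)))
      (by rw [finrank_span_eq_card hf.linearIndependent, Fintype.card_fin,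
        Module.finrank_eq_of_rank_eq h.1])
  refine ⟨f, hf, eq_diagOp hf hTf fun y hy => ?_⟩
  have hperp (x : L2) : ⟪Γ x, y⟫_ℂ = 0 := by
    have hx : Γ x ∈ Submodule.span ℂ (Set.range f) := hrange ▸ ⟨x, rfl⟩
    rw [inner_eq_sum_of_mem_span hf hx]
    simp [hy]
  rw [opT_apply_eq_zero_iff, ← inner_self_eq_zero (𝕜 := ℂ),
    ContinuousLinearMap.adjoint_inner_right, hperp]

end SimpleSingularValues

section GaussQuadrature

open Polynomial

variable {ι H : Type*} [Fintype ι] [NormedAddCommGroup H] [InnerProductSpace ℂ H]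
  {T : H →L[ℂ] H} {p t : ι → ℝ}

theorem inner_aeval_left (hT : T.IsSymmetric) (P : ℝ[X]) (x y : H) :
    ⟪aeval T P x, y⟫_ℂ = ⟪x, aeval T P y⟫_ℂ := by
  have hpow (n : ℕ) (x y : H) : ⟪(T ^ n) x, y⟫_ℂ = ⟪x, (T ^ n) y⟫_ℂ := by
    have h := hT.pow n x y
    rwa [← ContinuousLinearMap.toLinearMap_pow] at h
  have hexpand (z : H) : aeval T P z =
      ∑ k ∈ Finset.range (P.natDegree + 1), (P.coeff k : ℂ) • (T ^ k) z := by
    rw [aeval_eq_sum_range, sum_apply]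
    rfl
  simp only [hexpand, sum_inner, inner_sum, inner_smul_left, inner_smul_right, hpow,
    Complex.conj_ofReal]

theorem inner_aeval_of_moments {c : H} {m : ℕ}
    (hmom : ∀ n < m, ⟪c, (T ^ n) c⟫_ℂ = ((∑ j, p j * t j ^ n : ℝ) : ℂ))
    {P : ℝ[X]} (hP : P.natDegree < m) :
    ⟪c, aeval T P c⟫_ℂ = ((∑ j, p j * P.eval (t j) : ℝ) : ℂ) := by
  have hexpand : aeval T P c = ∑ k ∈ Finset.range m, (P.coeff k : ℂ) • (T ^ k) c := by
    rw [aeval_eq_sum_range' hP, sum_apply]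
    rfl
  have heval : ∑ j, p j * P.eval (t j) =
      ∑ k ∈ Finset.range m, P.coeff k * ∑ j, p j * t j ^ k := by
    simp only [eval_eq_sum_range' hP, Finset.mul_sum]
    rw [Finset.sum_comm]
    exact Finset.sum_congr rfl fun k _ => Finset.sum_congr rfl fun j _ => by ring
  rw [hexpand, inner_sum, heval, Complex.ofReal_sum]
  refine Finset.sum_congr rfl fun k hk => ?_
  rw [inner_smul_right, hmom k (Finset.mem_range.mp hk), Complex.ofReal_mul]

variable [DecidableEq ι]

/-- The `j`-th Lagrange basis polynomial at the nodes `t`, normalised to have norm one in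
`L²(∑ⱼ pⱼ δ_{tⱼ})`. -/
def normedLagrangeBasis (p t : ι → ℝ) (j : ι) : ℝ[X] :=
  C (√(p j))⁻¹ * Lagrange.basis Finset.univ t j

theorem natDegree_normedLagrangeBasis_lt (ht : Function.Injective t) (j : ι) :
    (normedLagrangeBasis p t j).natDegree < Fintype.card ι := by
  refine (natDegree_C_mul_le _ _).trans_lt ?_
  rw [Lagrange.natDegree_basis ht.injOn (Finset.mem_univ j)]
  exact Nat.sub_lt (Fintype.card_pos_iff.mpr ⟨j⟩) one_pos

theorem eval_normedLagrangeBasis (ht : Function.Injective t) (j k : ι) :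
    (normedLagrangeBasis p t j).eval (t k) = if j = k then (√(p j))⁻¹ else 0 := by
  rw [normedLagrangeBasis, eval_mul, eval_C]
  split_ifs with hjk
  · rw [hjk, Lagrange.eval_basis_self ht.injOn (Finset.mem_univ k), mul_one]
  · rw [Lagrange.eval_basis_of_ne hjk (Finset.mem_univ k), mul_zero]

theorem sum_sqrt_mul_normedLagrangeBasis [Nonempty ι] (ht : Function.Injective t)
    (hp : ∀ j, 0 < p j) : ∑ j, C √(p j) * normedLagrangeBasis p t j = 1 := by
  rw [← Lagrange.sum_basis ht.injOn Finset.univ_nonempty]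
  refine Finset.sum_congr rfl fun j _ => ?_
  rw [normedLagrangeBasis, ← mul_assoc, ← C_mul,
    mul_inv_cancel₀ (Real.sqrt_pos.mpr (hp j)).ne', C_1, one_mul]

theorem inner_aeval_normedLagrangeBasis (hT : T.IsSymmetric) (ht : Function.Injective t)
    (hp : ∀ j, 0 < p j) {c : H}
    (hmom : ∀ n < 2 * Fintype.card ι, ⟪c, (T ^ n) c⟫_ℂ = ((∑ j, p j * t j ^ n : ℝ) : ℂ))
    {R : ℝ[X]} (hR : R.natDegree ≤ 1) (j k : ι) :
    ⟪aeval T (normedLagrangeBasis p t j) c, aeval T (R * normedLagrangeBasis p t k) c⟫_ℂ =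
      if j = k then ((R.eval (t j) : ℝ) : ℂ) else 0 := by
  have hdeg : (normedLagrangeBasis p t j * (R * normedLagrangeBasis p t k)).natDegree <
      2 * Fintype.card ι := by
    have := natDegree_mul_le (p := normedLagrangeBasis p t j) (q := R * normedLagrangeBasis p t k)
    have := natDegree_mul_le (p := R) (q := normedLagrangeBasis p t k)
    have := natDegree_normedLagrangeBasis_lt (p := p) ht j
    have := natDegree_normedLagrangeBasis_lt (p := p) ht k
    omega
  rw [inner_aeval_left hT, ← mul_apply_eq_comp, ← map_mul, inner_aeval_of_moments hmom hdeg]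
  simp only [eval_mul, eval_normedLagrangeBasis ht]
  rw [Finset.sum_eq_single j (fun m _ hm => by simp [hm.symm]) (by simp)]
  rcases eq_or_ne j k with rfl | hjk
  · have hsqrt : √(p j) ≠ 0 := (Real.sqrt_pos.mpr (hp j)).ne'
    simp only [if_true]
    congr 1
    field_simp
    rw [Real.sq_sqrt (hp j).le]
  · simp [hjk, hjk.symm]

/-- Products of two of the polynomials `normedLagrangeBasis p t j` and one linear factor have degree
less than `2 * card ι`, so the moments determine the matrix of `T` in the basis they define. -/
theorem exists_orthonormal_of_moments [Nonempty ι] (hT : T.IsSymmetric)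
    (ht : Function.Injective t) (hp : ∀ j, 0 < p j) {c : H}
    (hmom : ∀ n < 2 * Fintype.card ι, ⟪c, (T ^ n) c⟫_ℂ = ((∑ j, p j * t j ^ n : ℝ) : ℂ)) :
    ∃ f : ι → H, Orthonormal ℂ f ∧
      (∀ j k, ⟪f j, T (f k)⟫_ℂ = if j = k then (t j : ℂ) else 0) ∧
      c = ∑ j, (√(p j) : ℂ) • f j := by
  refine ⟨fun j => aeval T (normedLagrangeBasis p t j) c,
    orthonormal_iff_ite.mpr fun j k => ?_, fun j k => ?_, ?_⟩
  · simpa using inner_aeval_normedLagrangeBasis hT ht hp hmom (R := 1) (by simp) j k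
  · simpa [mul_apply_eq_comp] using
      inner_aeval_normedLagrangeBasis hT ht hp hmom natDegree_X_le j k
  · have h := congrArg (fun P => aeval T P c) (sum_sqrt_mul_normedLagrangeBasis ht hp)
    simp only [map_sum, map_mul, aeval_C, map_one, sum_apply, mul_apply_eq_comp] at h
    exact h.symm

end GaussQuadrature

section HilbertSchmidt

variable {κ ι H K : Type*} [Fintype ι] [NormedAddCommGroup H] [InnerProductSpace ℂ H]
  [NormedAddCommGroup K] [InnerProductSpace ℂ K]

theorem norm_sub_sum_inner_smul_sq {v : ι → H} (hv : Orthonormal ℂ v) (x : H) :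
    ‖x - ∑ j, ⟪v j, x⟫_ℂ • v j‖ ^ 2 = ‖x‖ ^ 2 - ∑ j, ‖⟪v j, x⟫_ℂ‖ ^ 2 := by
  set r := x - ∑ j, ⟪v j, x⟫_ℂ • v j with hr
  have hperp : ⟪∑ j, ⟪v j, x⟫_ℂ • v j, r⟫_ℂ = 0 := by
    simp only [hr, sum_inner, inner_smul_left, inner_sub_sum_inner_smul_eq_zero hv, mul_zero,
      Finset.sum_const_zero]
  apply Complex.ofReal_injective
  calc ((‖r‖ ^ 2 : ℝ) : ℂ) = ⟪x, r⟫_ℂ := by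
        rw [← sub_zero ⟪x, r⟫_ℂ, ← hperp, ← inner_sub_left, ← hr, inner_self_eq_norm_sq_to_K]
        exact Complex.ofReal_pow _ _
    _ = ((‖x‖ ^ 2 - ∑ j, ‖⟪v j, x⟫_ℂ‖ ^ 2 : ℝ) : ℂ) := by
        simp only [hr, inner_sub_right, inner_sum, inner_smul_right, inner_self_eq_norm_sq_to_K,
          Complex.ofReal_sub, Complex.ofReal_sum, Complex.ofReal_pow,
          ← Complex.mul_conj', inner_conj_symm, Complex.coe_algebraMap]

theorem hasSum_norm_inner_sq (d : HilbertBasis κ ℂ H) (x : H) :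
    HasSum (fun n => ‖⟪d n, x⟫_ℂ‖ ^ 2) (‖x‖ ^ 2) := by
  have h := Complex.hasSum_re (d.hasSum_inner_mul_inner x x)
  simp only [inner_self_eq_norm_sq_to_K, ← inner_conj_symm x (d _), Complex.conj_mul',
    Complex.coe_algebraMap, ← Complex.ofReal_pow, Complex.ofReal_re] at h
  exact h

theorem hasSum_inner_diagOp (d : HilbertBasis κ ℂ H) {f : ι → H} (hf : ∀ j, ‖f j‖ = 1)
    (t : ι → ℝ) : HasSum (fun n => ⟪d n, diagOp f t (d n)⟫_ℂ) ((∑ j, t j : ℝ) : ℂ) := by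
  have hunit (j : ι) : ⟪f j, f j⟫_ℂ = 1 := by simp [inner_self_eq_norm_sq_to_K, hf]
  have hterm := hasSum_sum fun j (_ : j ∈ Finset.univ) =>
    (d.hasSum_inner_mul_inner (f j) (f j)).mul_left (t j : ℂ)
  simpa only [diagOp_apply, inner_sum, inner_smul_right, hunit, mul_one, mul_assoc,
    Complex.ofReal_sum] using hterm

variable [CompleteSpace H] [CompleteSpace K] {d : HilbertBasis κ ℂ H} {A : H →L[ℂ] K} {S : ℝ}
  {v : ι → K}

theorem hasSum_norm_sub_sum_inner_smul_sq (hv : Orthonormal ℂ v)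
    (hA : HasSum (fun n => ‖A (d n)‖ ^ 2) S) :
    HasSum (fun n => ‖A (d n) - ∑ j, ⟪v j, A (d n)⟫_ℂ • v j‖ ^ 2)
      (S - ∑ j, ‖ContinuousLinearMap.adjoint A (v j)‖ ^ 2) := by
  simp only [norm_sub_sum_inner_smul_sq hv]
  refine hA.sub (hasSum_sum fun j _ => ?_)
  have h := hasSum_norm_inner_sq d (ContinuousLinearMap.adjoint A (v j))
  simpa only [ContinuousLinearMap.adjoint_inner_right, norm_inner_symm (A _)] using h

theorem sum_norm_adjoint_sq_le (hv : Orthonormal ℂ v)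
    (hA : HasSum (fun n => ‖A (d n)‖ ^ 2) S) :
    ∑ j, ‖ContinuousLinearMap.adjoint A (v j)‖ ^ 2 ≤ S :=
  sub_nonneg.mp ((hasSum_norm_sub_sum_inner_smul_sq hv hA).nonneg fun _ => sq_nonneg _)

theorem adjoint_apply_eq_zero_of_sum_norm_adjoint_sq_eq (hv : Orthonormal ℂ v)
    (hA : HasSum (fun n => ‖A (d n)‖ ^ 2) S)
    (hS : ∑ j, ‖ContinuousLinearMap.adjoint A (v j)‖ ^ 2 = S) {y : K}
    (hy : ∀ j, ⟪v j, y⟫_ℂ = 0) : ContinuousLinearMap.adjoint A y = 0 := by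
  have hres := hasSum_norm_sub_sum_inner_smul_sq hv hA
  rw [hS, sub_self, hasSum_zero_iff_of_nonneg fun _ => sq_nonneg _] at hres
  refine d.repr.injective (lp.ext (funext fun n => ?_))
  have hn : A (d n) = ∑ j, ⟪v j, A (d n)⟫_ℂ • v j := by
    simpa [sub_eq_zero] using congrFun hres n
  rw [d.repr_apply_apply, ContinuousLinearMap.adjoint_inner_right, hn, sum_inner]
  simp [inner_smul_left, hy]

end HilbertSchmidt

section AntidiagonalSums

theorem hasSum_sigma_iff_of_nonneg {α : Type*} {β : α → Type*} {F : (Σ a, β a) → ℝ}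
    (hF : ∀ x, 0 ≤ F x) {s : α → ℝ} (hs : ∀ a, HasSum (fun b => F ⟨a, b⟩) (s a)) {S : ℝ} :
    HasSum F S ↔ HasSum s S := by
  refine ⟨fun h => h.sigma hs, fun h => ?_⟩
  have hF_summable : Summable F := (summable_sigma_of_nonneg hF).mpr
    ⟨fun a => (hs a).summable, by simpa only [(hs _).tsum_eq] using h.summable⟩
  rw [h.unique (hF_summable.hasSum.sigma hs)]
  exact hF_summable.hasSum

/-- Both sums are the sum of `g (n + m)` over `ℕ × ℕ`, by rows and by antidiagonals. -/
theorem hasSum_tails_iff {g s : ℕ → ℝ} (hg : ∀ n, 0 ≤ g n)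
    (hs : ∀ n, HasSum (fun m => g (n + m)) (s n)) {S : ℝ} :
    HasSum s S ↔ HasSum (fun n : ℕ => ((n : ℝ) + 1) * g n) S := by
  have hdiag (n : ℕ) : HasSum (fun _ : Finset.HasAntidiagonal.antidiagonal n => g n)
      (((n : ℝ) + 1) * g n) := by
    simpa using hasSum_fintype fun _ : Finset.HasAntidiagonal.antidiagonal n => g n
  rw [← hasSum_sigma_iff_of_nonneg (F := fun x : Σ _ : ℕ, ℕ => g (x.1 + x.2)) (fun _ => hg _) hs,
    ← hasSum_sigma_iff_of_nonneg
      (F := fun x : Σ n : ℕ, Finset.HasAntidiagonal.antidiagonal n => g x.1) (fun _ => hg _) hdiag,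
    ← (Equiv.sigmaEquivProd ℕ ℕ).symm.hasSum_iff,
    ← Finset.HasAntidiagonal.sigmaAntidiagonalEquivProd.hasSum_iff]
  refine iff_of_eq (congrArg (HasSum · S) (funext fun x => ?_))
  exact congrArg g (Finset.HasAntidiagonal.mem_antidiagonal.mp x.2.2)

end AntidiagonalSums

section HankelOperators

open InnerProductSpace (rankOne)

/-- The standard basis `eₙ` of `ℓ²(ℕ, ℂ)`. -/
def stdBasis : HilbertBasis ℕ ℂ L2 := HilbertBasis.ofRepr (LinearIsometryEquiv.refl ℂ L2)

theorem stdBasis_zero : stdBasis 0 = e0 := stdBasis.repr_symm_single 0 |>.symm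

theorem inner_stdBasis (n : ℕ) (x : L2) : ⟪stdBasis n, x⟫_ℂ = x n :=
  (stdBasis.repr_apply_apply x n).symm

theorem star_stdBasis (n : ℕ) : star (stdBasis n) = stdBasis n := by
  refine lp.ext (funext fun m => ?_)
  rw [lp.coeFn_star, Pi.star_apply, ← inner_stdBasis,
    orthonormal_iff_ite.mp stdBasis.orthonormal]
  split_ifs <;> simp

theorem inner_star_star (x y : L2) : ⟪star x, star y⟫_ℂ = ⟪y, x⟫_ℂ := by
  rw [lp.inner_eq_tsum, lp.inner_eq_tsum]
  exact tsum_congr fun n => by simp [mul_comm]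

/-- The isometry `eₙ ↦ eₙ₊₁` of `ℓ²(ℕ, ℂ)`. -/
def unilateralShift : L2 →L[ℂ] L2 :=
  (stdBasis.orthonormal.comp (· + 1) (add_left_injective 1)).orthogonalFamily.linearIsometry
    |>.toContinuousLinearMap

theorem unilateralShift_stdBasis (n : ℕ) : unilateralShift (stdBasis n) = stdBasis (n + 1) := by
  have hsingle : stdBasis n = lp.single 2 n (1 : ℂ) := (stdBasis.repr_symm_single n).symm
  rw [unilateralShift, hsingle, LinearIsometry.coe_toContinuousLinearMap,
    OrthogonalFamily.linearIsometry_apply_single, LinearIsometry.toSpanSingleton_apply, one_smul,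
    Function.comp_apply]

theorem inner_unilateralShift (x y : L2) :
    ⟪unilateralShift x, unilateralShift y⟫_ℂ = ⟪x, y⟫_ℂ :=
  LinearIsometry.inner_map_map _ x y

theorem adjoint_unilateralShift_apply (x : L2) (n : ℕ) :
    ContinuousLinearMap.adjoint unilateralShift x n = x (n + 1) := by
  rw [← inner_stdBasis, ContinuousLinearMap.adjoint_inner_right, unilateralShift_stdBasis,
    inner_stdBasis]

theorem opT_unilateralShift : opT unilateralShift = 1 - rankOne ℂ e0 e0 := by
  have hadj_zero : ContinuousLinearMap.adjoint unilateralShift (stdBasis 0) = 0 := by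
    refine lp.ext (funext fun n => ?_)
    rw [adjoint_unilateralShift_apply, ← inner_stdBasis,
      stdBasis.orthonormal.inner_eq_zero n.succ_ne_zero]
    rfl
  ext x n
  rw [opT, ContinuousLinearMap.comp_apply, ← inner_stdBasis, ← inner_stdBasis, sub_apply,
    one_apply_eq_self, InnerProductSpace.rankOne_apply, ← stdBasis_zero, inner_sub_right,
    inner_smul_right, orthonormal_iff_ite.mp stdBasis.orthonormal]
  cases n with
  | zero =>
    rw [← ContinuousLinearMap.adjoint_inner_left, hadj_zero, inner_zero_left, if_pos rfl, mul_one,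
      sub_self]
  | succ n =>
    rw [if_neg n.succ_ne_zero, mul_zero, sub_zero, ← unilateralShift_stdBasis,
      inner_unilateralShift, ContinuousLinearMap.adjoint_inner_right]

theorem isHankelOp_iff {c : ℕ → ℂ} {Γ : L2 →L[ℂ] L2} :
    IsHankelOp c Γ ↔ ∀ n p, ⟪stdBasis n, Γ (stdBasis p)⟫_ℂ = c (n + p) := by
  refine ⟨fun h n p => ?_, fun h x n => ?_⟩
  · rw [inner_stdBasis, h, tsum_eq_single p fun q hq => ?_]
    · rw [← inner_stdBasis, orthonormal_iff_ite.mp stdBasis.orthonormal, if_pos rfl, mul_one]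
    · rw [← inner_stdBasis, orthonormal_iff_ite.mp stdBasis.orthonormal, if_neg hq, mul_zero]
  · rw [← inner_stdBasis, ← ContinuousLinearMap.adjoint_inner_left,
      ← stdBasis.tsum_inner_mul_inner]
    simp only [ContinuousLinearMap.adjoint_inner_left, h, inner_stdBasis]

namespace IsHankelOp

variable {c : ℕ → ℂ} {Γ Γt : L2 →L[ℂ] L2}

theorem apply_stdBasis (h : IsHankelOp c Γ) (n p : ℕ) : Γ (stdBasis p) n = c (n + p) := by
  rw [← inner_stdBasis, isHankelOp_iff.mp h]

theorem apply_e0 (h : IsHankelOp c Γ) (n : ℕ) : Γ e0 n = c n := by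
  rw [← stdBasis_zero, h.apply_stdBasis, add_zero]

protected theorem unique (h : IsHankelOp c Γ) (ht : IsHankelOp c Γt) : Γ = Γt :=
  ContinuousLinearMap.ext fun x => lp.ext (funext fun n => (h x n).trans (ht x n).symm)

theorem adjoint_eq_star (h : IsHankelOp c Γ) (x : L2) :
    ContinuousLinearMap.adjoint Γ x = star (Γ (star x)) := by
  refine lp.ext (funext fun n => ?_)
  rw [← inner_stdBasis, ContinuousLinearMap.adjoint_inner_right, lp.inner_eq_tsum, lp.coeFn_star,
    Pi.star_apply, h, Complex.star_def, Complex.conj_tsum]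
  refine tsum_congr fun m => ?_
  rw [h.apply_stdBasis, add_comm]
  simp [mul_comm]

theorem norm_adjoint_stdBasis (h : IsHankelOp c Γ) (n : ℕ) :
    ‖ContinuousLinearMap.adjoint Γ (stdBasis n)‖ = ‖Γ (stdBasis n)‖ := by
  rw [h.adjoint_eq_star, star_stdBasis, norm_star]

theorem opT_apply (h : IsHankelOp c Γ) (x : L2) : opT Γ x = Γ (star (Γ (star x))) := by
  rw [opT, ContinuousLinearMap.comp_apply, h.adjoint_eq_star]

theorem opT_pow_apply_star (h : IsHankelOp c Γ) (n : ℕ) (x : L2) :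
    (opT Γ ^ n) (Γ (star x)) = Γ (star ((opT Γ ^ n) x)) := by
  induction n with
  | zero => simp
  | succ n ih =>
    rw [pow_succ', mul_apply_eq_comp, mul_apply_eq_comp, ih, h.opT_apply, h.opT_apply]

theorem inner_opT_pow_succ (h : IsHankelOp c Γ) (n : ℕ) :
    ⟪e0, (opT Γ ^ (n + 1)) e0⟫_ℂ = ⟪Γ e0, (opT Γ ^ n) (Γ e0)⟫_ℂ := by
  have hstar : star e0 = e0 := stdBasis_zero ▸ star_stdBasis 0
  calc ⟪e0, (opT Γ ^ (n + 1)) e0⟫_ℂ = ⟪e0, Γ (star (Γ (star ((opT Γ ^ n) e0))))⟫_ℂ := by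
        rw [pow_succ', mul_apply_eq_comp, h.opT_apply]
    _ = ⟪Γ (star ((opT Γ ^ n) e0)), Γ e0⟫_ℂ := by
        rw [← ContinuousLinearMap.adjoint_inner_left, h.adjoint_eq_star, inner_star_star, hstar]
    _ = ⟪Γ e0, (opT Γ ^ n) (Γ e0)⟫_ℂ := by
        rw [← h.opT_pow_apply_star, hstar]
        have hsymm := (isSymmetric_opT Γ).pow n (Γ e0) (Γ e0)
        rwa [← ContinuousLinearMap.toLinearMap_pow] at hsymm

theorem comp_unilateralShift (h : IsHankelOp c Γ) :
    IsHankelOp (shiftSeq c) (Γ ∘L unilateralShift) := by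
  refine isHankelOp_iff.mpr fun n p => ?_
  rw [ContinuousLinearMap.comp_apply, unilateralShift_stdBasis, isHankelOp_iff.mp h, ← add_assoc,
    shiftSeq]

theorem opT_eq_add_rankOne (h : IsHankelOp c Γ) (ht : IsHankelOp (shiftSeq c) Γt) :
    opT Γ = opT Γt + rankOne ℂ (Γ e0) (Γ e0) := by
  rw [ht.unique h.comp_unilateralShift]
  have hshift : opT (Γ ∘L unilateralShift)
      = Γ ∘L opT unilateralShift ∘L ContinuousLinearMap.adjoint Γ := by
    rw [opT, ContinuousLinearMap.adjoint_comp]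
    rfl
  ext1 x
  rw [hshift, opT_unilateralShift]
  simp [opT, InnerProductSpace.rankOne_apply, ContinuousLinearMap.adjoint_inner_right]

theorem norm_adjoint_sq_eq_add (h : IsHankelOp c Γ) (ht : IsHankelOp (shiftSeq c) Γt) (x : L2) :
    ‖ContinuousLinearMap.adjoint Γ x‖ ^ 2
      = ‖ContinuousLinearMap.adjoint Γt x‖ ^ 2 + ‖⟪x, Γ e0⟫_ℂ‖ ^ 2 := by
  apply Complex.ofReal_injective
  rw [← inner_opT_self, h.opT_eq_add_rankOne ht, add_apply, inner_add_right, inner_opT_self,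
    InnerProductSpace.rankOne_apply, inner_smul_right, ← inner_conj_symm (Γ e0),
    Complex.conj_mul', Complex.ofReal_add, Complex.ofReal_pow ‖⟪x, Γ e0⟫_ℂ‖]

theorem hasSum_norm_apply_stdBasis_sq_iff (ht : IsHankelOp (shiftSeq c) Γt) {S : ℝ} :
    HasSum (fun n => ‖Γt (stdBasis n)‖ ^ 2) S ↔ HasSum (fun n : ℕ => (n : ℝ) * ‖c n‖ ^ 2) S := by
  have htail (n : ℕ) : HasSum (fun m => ‖shiftSeq c (n + m)‖ ^ 2) (‖Γt (stdBasis n)‖ ^ 2) := by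
    simpa only [inner_stdBasis, ht.apply_stdBasis, add_comm] using
      hasSum_norm_inner_sq stdBasis (Γt (stdBasis n))
  rw [hasSum_tails_iff (g := fun n => ‖shiftSeq c n‖ ^ 2) (fun _ => sq_nonneg _) htail,
    ← hasSum_nat_add_iff' (f := fun n : ℕ => (n : ℝ) * ‖c n‖ ^ 2) 1]
  simp [shiftSeq]

theorem hasSum_of_opT_eq_diagOp (ht : IsHankelOp (shiftSeq c) Γt) {ι : Type*} [Fintype ι]
    {g : ι → L2} {b : ι → ℝ} (hg : Orthonormal ℂ g) (h : opT Γt = diagOp g b) :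
    HasSum (fun n : ℕ => (n : ℝ) * ‖c n‖ ^ 2) (∑ j, b j) := by
  rw [← ht.hasSum_norm_apply_stdBasis_sq_iff]
  simp only [← ht.norm_adjoint_stdBasis]
  have htrace := hasSum_inner_diagOp stdBasis hg.1 b
  simp only [← h, inner_opT_self] at htrace
  exact_mod_cast htrace

end IsHankelOp

end HankelOperators

section Minimizers

variable {N : ℕ} {a b : Fin N → ℝ} {c : ℕ → ℂ} {Γ Γt : L2 →L[ℂ] L2} {f g : Fin N → L2}

theorem Interlacing.exists_orthonormal_of_moments [Nonempty (Fin N)] (hab : Interlacing a b)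
    (hmom : ∀ n < 2 * N, ⟪Γ e0, (opT Γ ^ n) (Γ e0)⟫_ℂ =
      ((∑ j, residueWeight a b j * a j ^ n : ℝ) : ℂ)) :
    ∃ f : Fin N → L2, Orthonormal ℂ f ∧
      (∀ j k, ⟪f j, opT Γ (f k)⟫_ℂ = if j = k then (a j : ℂ) else 0) ∧
      Γ e0 = ∑ j, (√(residueWeight a b j) : ℂ) • f j :=
  _root_.exists_orthonormal_of_moments (isSymmetric_opT Γ) hab.strictAnti_left.injective
    hab.residueWeight_pos (by rwa [Fintype.card_fin])

namespace IsHankelOp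

theorem sum_norm_adjoint_shift_sq_eq (hab : Interlacing a b) (h : IsHankelOp c Γ)
    (ht : IsHankelOp (shiftSeq c) Γt) (hf : Orthonormal ℂ f)
    (hdiag : ∀ j k, ⟪f j, opT Γ (f k)⟫_ℂ = if j = k then (a j : ℂ) else 0)
    (hsum : Γ e0 = ∑ j, (√(residueWeight a b j) : ℂ) • f j) :
    ∑ j, ‖ContinuousLinearMap.adjoint Γt (f j)‖ ^ 2 = ∑ j, b j := by
  have hnorm (j : Fin N) :
      ‖ContinuousLinearMap.adjoint Γt (f j)‖ ^ 2 = a j - residueWeight a b j := by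
    have hΓ : ‖ContinuousLinearMap.adjoint Γ (f j)‖ ^ 2 = a j := by
      apply Complex.ofReal_injective
      rw [← inner_opT_self, hdiag, if_pos rfl]
    rw [← norm_inner_sq_of_eq_sum_sqrt hf (fun j => (hab.residueWeight_pos j).le) hsum j, ← hΓ,
      h.norm_adjoint_sq_eq_add ht, add_sub_cancel_right]
  simp only [hnorm, Finset.sum_sub_distrib]
  rw [sum_residueWeight hab.strictAnti_left.injective, sub_sub_cancel]

theorem inner_opT_pow_of_opT_eq_diagOp (hab : Interlacing a b) (h : IsHankelOp c Γ)
    (ht : IsHankelOp (shiftSeq c) Γt) (hf : Orthonormal ℂ f) (hg : Orthonormal ℂ g)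
    (hΓ : opT Γ = diagOp f a) (hΓt : opT Γt = diagOp g b) (n : ℕ) :
    ⟪Γ e0, (opT Γ ^ n) (Γ e0)⟫_ℂ = ((∑ j, residueWeight a b j * a j ^ n : ℝ) : ℂ) := by
  have hspan := apply_mem_span_of_opT_eq_diagOp hΓ e0
  have hweight : (fun j => ‖⟪f j, Γ e0⟫_ℂ‖ ^ 2) = residueWeight a b := by
    refine eq_of_sum_div_sub_eq hab.strictAnti_left.injective hab.strictAnti_right.injective
      hab.ne fun k => ?_
    rw [sum_residueWeight_div_sub hab.strictAnti_left.injective hab.ne]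
    exact sum_norm_inner_sq_div_sub_eq_one hf hg hspan
      (hΓ ▸ hΓt ▸ h.opT_eq_add_rankOne ht) (hab.pos_right k).ne' (hab.ne · k)
  rw [hΓ, inner_diagOp_pow_self hf hspan, ← hweight]

variable [Nonempty (Fin N)]

theorem sum_le_tsum_of_moments (hab : Interlacing a b) (hc : InH12 c) (h : IsHankelOp c Γ)
    (hmom : ∀ n < 2 * N, ⟪Γ e0, (opT Γ ^ n) (Γ e0)⟫_ℂ =
      ((∑ j, residueWeight a b j * a j ^ n : ℝ) : ℂ)) :
    ∑ j, b j ≤ ∑' n : ℕ, (n : ℝ) * ‖c n‖ ^ 2 := by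
  obtain ⟨f, hf, hdiag, hsum⟩ := hab.exists_orthonormal_of_moments hmom
  have ht := h.comp_unilateralShift
  rw [← sum_norm_adjoint_shift_sq_eq hab h ht hf hdiag hsum]
  exact sum_norm_adjoint_sq_le hf (ht.hasSum_norm_apply_stdBasis_sq_iff.mpr hc.2.hasSum)

theorem exists_opT_eq_diagOp_of_moments (hab : Interlacing a b) (hc : InH12 c)
    (h : IsHankelOp c Γ) (ht : IsHankelOp (shiftSeq c) Γt)
    (hmom : ∀ n < 2 * N, ⟪Γ e0, (opT Γ ^ n) (Γ e0)⟫_ℂ =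
      ((∑ j, residueWeight a b j * a j ^ n : ℝ) : ℂ))
    (hmin : ∑' n : ℕ, (n : ℝ) * ‖c n‖ ^ 2 = ∑ j, b j) :
    ∃ f g : Fin N → L2, Orthonormal ℂ f ∧ Orthonormal ℂ g ∧
      opT Γ = diagOp f a ∧ opT Γt = diagOp g b := by
  obtain ⟨f, hf, hdiag, hsum⟩ := hab.exists_orthonormal_of_moments hmom
  have hspan := mem_span_of_eq_sum_smul hsum
  have hΓ : opT Γ = diagOp f a := by
    refine eq_diagOp_of_inner_eq hf (isSymmetric_opT Γ) hdiag fun y hy => ?_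
    have hΓt : opT Γt y = 0 := opT_apply_eq_zero_iff.mpr <|
      adjoint_apply_eq_zero_of_sum_norm_adjoint_sq_eq hf
        (ht.hasSum_norm_apply_stdBasis_sq_iff.mpr hc.2.hasSum)
        ((sum_norm_adjoint_shift_sq_eq hab h ht hf hdiag hsum).trans hmin.symm) hy
    rw [h.opT_eq_add_rankOne ht, add_apply, hΓt, InnerProductSpace.rankOne_apply, zero_add,
      inner_eq_sum_of_mem_span hf hspan]
    simp [hy]
  obtain ⟨g, hg, hfg⟩ := hab.exists_diagOp_eq_add_rankOne hf hsum
  exact ⟨f, g, hf, hg, hΓ, add_right_cancel ((h.opT_eq_add_rankOne ht).symm.trans (hΓ.trans hfg))⟩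

theorem hasSimpleSVals_iff (hab : Interlacing a b) (hc : InH12 c) (h : IsHankelOp c Γ)
    (ht : IsHankelOp (shiftSeq c) Γt) :
    HasSimpleSVals Γ N (fun j => √(a j)) ∧ HasSimpleSVals Γt N (fun j => √(b j)) ↔
      (∀ n < 2 * N, ⟪Γ e0, (opT Γ ^ n) (Γ e0)⟫_ℂ =
        ((∑ j, residueWeight a b j * a j ^ n : ℝ) : ℂ)) ∧
      ∑' n : ℕ, (n : ℝ) * ‖c n‖ ^ 2 = ∑ j, b j := by
  have ha := hab.strictAnti_left.injective
  have hb := hab.strictAnti_right.injective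
  constructor
  · rintro ⟨hΓ, hΓt⟩
    obtain ⟨f, hf, hfa⟩ := hΓ.exists_opT_eq_diagOp ha hab.pos_left
    obtain ⟨g, hg, hgb⟩ := hΓt.exists_opT_eq_diagOp hb hab.pos_right
    exact ⟨fun n _ => inner_opT_pow_of_opT_eq_diagOp hab h ht hf hg hfa hgb n,
      (ht.hasSum_of_opT_eq_diagOp hg hgb).tsum_eq⟩
  · rintro ⟨hmom, hmin⟩
    obtain ⟨f, g, hf, hg, hfa, hgb⟩ := exists_opT_eq_diagOp_of_moments hab hc h ht hmom hmin
    exact ⟨.of_opT_eq_diagOp ha hab.pos_left hf hfa, .of_opT_eq_diagOp hb hab.pos_right hg hgb⟩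

end IsHankelOp

end Minimizers

section PowersTendToZero

open Filter Topology

theorem tendsto_pow_of_forall_mem_spectrum_norm_lt_one {A : Type*} [NormedRing A]
    [NormedAlgebra ℂ A] [CompleteSpace A] {a : A} (ha : ∀ z ∈ spectrum ℂ a, ‖z‖ < 1) :
    Tendsto (fun n : ℕ => a ^ n) atTop (𝓝 0) := by
  rcases subsingleton_or_nontrivial A with _ | _
  · exact tendsto_const_nhds.congr fun n => Subsingleton.elim _ _
  obtain ⟨r, hr, hr1⟩ := ENNReal.lt_iff_exists_nnreal_btwn.mp
    (spectrum.spectralRadius_lt_of_forall_lt a (r := 1) ha)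
  have hle : ∀ᶠ n : ℕ in atTop, ‖a ^ n‖ ≤ (r : ℝ) ^ n := by
    filter_upwards [eventually_ne_atTop 0,
      (spectrum.pow_nnnorm_pow_one_div_tendsto_nhds_spectralRadius a).eventually_lt_const hr]
      with n hn0 hn
    have hpow := pow_le_pow_left' hn.le n
    rw [← ENNReal.rpow_natCast, ← ENNReal.rpow_mul, one_div,
      inv_mul_cancel₀ (Nat.cast_ne_zero.mpr hn0), ENNReal.rpow_one] at hpow
    exact_mod_cast hpow
  exact squeeze_zero_norm' hle
    (tendsto_pow_atTop_nhds_zero_of_lt_one r.coe_nonneg (by exact_mod_cast hr1))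

theorem tendsto_pow_of_forall_hasEigenvalue_norm_lt_one {E : Type*} [NormedAddCommGroup E]
    [NormedSpace ℂ E] [FiniteDimensional ℂ E] {A : E →L[ℂ] E}
    (hA : ∀ z, Module.End.HasEigenvalue (A : Module.End ℂ E) z → ‖z‖ < 1) :
    Tendsto (fun n : ℕ => A ^ n) atTop (𝓝 0) := by
  have := FiniteDimensional.complete ℂ E
  refine tendsto_pow_of_forall_mem_spectrum_norm_lt_one fun z hz => hA z ?_
  rw [Module.End.hasEigenvalue_iff_mem_spectrum]
  rwa [← AlgEquiv.spectrum_eq (Module.End.toContinuousLinearMap E)]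

end PowersTendToZero

section HankelModels

open Filter Topology ContinuousLinearMap
open InnerProductSpace (rankOne)

/-- Finite-dimensional data from which a Hankel operator is built: self-adjoint operators `op` and
`shiftOp`, a vector `vec` cyclic for `op`, and the relation `op² = shiftOp² + ⟪vec, ·⟫ vec` that
`ΓΓ*`, `Γ̃Γ̃*` and `Γ e₀` satisfy for every Hankel operator `Γ`. -/
structure HankelModel (E : Type*) [NormedAddCommGroup E] [InnerProductSpace ℂ E]
    [CompleteSpace E] where
  op : (E →L[ℂ] E)ˣ
  shiftOp : E →L[ℂ] E
  vec : E
  isSelfAdjoint_op : IsSelfAdjoint (op : E →L[ℂ] E)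
  isSelfAdjoint_shiftOp : IsSelfAdjoint shiftOp
  op_mul_op : (op * op : E →L[ℂ] E) = shiftOp * shiftOp + rankOne ℂ vec vec
  eq_zero_of_forall_inner_pow : ∀ z, (∀ n, ⟪vec, ((op : E →L[ℂ] E) ^ n) z⟫_ℂ = 0) → z = 0

namespace HankelModel

variable {E : Type*} [NormedAddCommGroup E] [InnerProductSpace ℂ E]

section Complete

variable [CompleteSpace E] (m : HankelModel E)

/-- The contraction `shiftOp ∘ op⁻¹`, which the observability isometry intertwines with the
backward shift of `ℓ²`. -/
def transition : E →L[ℂ] E := m.shiftOp * ↑m.op⁻¹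

/-- The operators `op⁻¹ (shiftOp op⁻¹)ⁿ`. They are self-adjoint, and
`observer n * op * observer p` depends on `n + p` only: the source of the Hankel structure. -/
def observer (n : ℕ) : E →L[ℂ] E := ↑m.op⁻¹ * m.transition ^ n

/-- The symbol of the Hankel operator attached to the model. -/
def symbol (n : ℕ) : ℂ := ⟪m.vec, m.observer n m.vec⟫_ℂ

theorem isSelfAdjoint_observer (n : ℕ) : IsSelfAdjoint (m.observer n) := by
  have hinv : star (↑m.op⁻¹ : E →L[ℂ] E) = ↑m.op⁻¹ := by
    have hop : star m.op = m.op := Units.ext m.isSelfAdjoint_op.star_eq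
    rw [← Units.coe_star_inv, hop]
  rw [IsSelfAdjoint, observer, transition, star_mul, star_pow, star_mul, hinv,
    m.isSelfAdjoint_shiftOp.star_eq, mul_pow_mul]

theorem observer_mul_op_mul_observer (n p : ℕ) :
    m.observer n * (m.op * m.observer p) = m.observer (n + p) := by
  rw [observer, observer, observer, Units.mul_inv_cancel_left, mul_assoc, pow_add]

theorem observer_mul_shiftOp_mul_observer (n p : ℕ) :
    m.observer n * (m.shiftOp * m.observer p) = m.observer (n + p + 1) := by
  rw [observer, observer, observer, ← mul_assoc m.shiftOp, ← transition, mul_assoc, ← pow_succ',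
    ← pow_add, add_assoc]

theorem norm_op_sq (z : E) :
    ‖(m.op : E →L[ℂ] E) z‖ ^ 2 = ‖m.shiftOp z‖ ^ 2 + ‖⟪m.vec, z⟫_ℂ‖ ^ 2 := by
  have h := congrArg (fun T : E →L[ℂ] E => ⟪z, T z⟫_ℂ) m.op_mul_op
  simp only [mul_apply_eq_comp, add_apply, InnerProductSpace.rankOne_apply, inner_add_right,
    inner_smul_right, ← adjoint_inner_left, m.isSelfAdjoint_op.adjoint_eq,
    m.isSelfAdjoint_shiftOp.adjoint_eq, inner_self_eq_norm_sq_to_K, ← inner_conj_symm z m.vec,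
    Complex.mul_conj', Complex.coe_algebraMap] at h
  exact_mod_cast h

theorem norm_sq_eq_norm_transition_sq_add (x : E) :
    ‖x‖ ^ 2 = ‖m.transition x‖ ^ 2 + ‖⟪m.vec, (↑m.op⁻¹ : E →L[ℂ] E) x⟫_ℂ‖ ^ 2 := by
  have h := m.norm_op_sq ((↑m.op⁻¹ : E →L[ℂ] E) x)
  rwa [← mul_apply_eq_comp, m.op.mul_inv, one_apply_eq_self] at h

theorem inner_vec_eq_zero_and_shiftOp_op_eq_smul {s : ℂ} (hs : ‖s‖ = 1) {z : E}
    (hz : m.shiftOp z = s • (m.op : E →L[ℂ] E) z) :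
    ⟪m.vec, z⟫_ℂ = 0 ∧
      m.shiftOp ((m.op : E →L[ℂ] E) z) = conj s • (m.op : E →L[ℂ] E) ((m.op : E →L[ℂ] E) z) := by
  have hvec : ⟪m.vec, z⟫_ℂ = 0 := by
    simpa [hz, norm_smul, hs] using m.norm_op_sq z
  have happly := congrArg (· z) m.op_mul_op
  simp only [mul_apply_eq_comp, add_apply, InnerProductSpace.rankOne_apply, hvec, zero_smul,
    add_zero, hz, map_smul] at happly
  refine ⟨hvec, ?_⟩
  rw [happly, smul_smul, Complex.conj_mul', hs]
  simp

/-- `op` maps solutions `z` to solutions for `conj s`, and all of them are orthogonal to `vec`, so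
`z = 0` by cyclicity. -/
theorem eq_zero_of_shiftOp_eq_smul {s : ℂ} (hs : ‖s‖ = 1) {z : E}
    (hz : m.shiftOp z = s • (m.op : E →L[ℂ] E) z) : z = 0 := by
  refine m.eq_zero_of_forall_inner_pow z fun n => ?_
  induction n generalizing s z with
  | zero => exact (m.inner_vec_eq_zero_and_shiftOp_op_eq_smul hs hz).1
  | succ n ih =>
    rw [pow_succ, mul_apply_eq_comp]
    exact ih ((RCLike.norm_conj s).trans hs) (m.inner_vec_eq_zero_and_shiftOp_op_eq_smul hs hz).2

theorem norm_lt_one_of_hasEigenvalue_transition {s : ℂ}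
    (hs : Module.End.HasEigenvalue (m.transition : Module.End ℂ E) s) : ‖s‖ < 1 := by
  obtain ⟨x, hx, hx0⟩ := hs.exists_hasEigenvector
  have hx' : m.transition x = s • x := Module.End.mem_eigenspace_iff.mp hx
  refine lt_of_le_of_ne ?_ fun hs1 => hx0 ?_
  · have hle : ‖s • x‖ ≤ ‖x‖ := by
      rw [← sq_le_sq₀ (norm_nonneg _) (norm_nonneg _), ← hx',
        m.norm_sq_eq_norm_transition_sq_add x]
      exact le_add_of_nonneg_right (sq_nonneg _)
    rwa [norm_smul, mul_le_iff_le_one_left (norm_pos_iff.mpr hx0)] at hle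
  · have hopx : (m.op : E →L[ℂ] E) ((↑m.op⁻¹ : E →L[ℂ] E) x) = x := by
      rw [← mul_apply_eq_comp, m.op.mul_inv, one_apply_eq_self]
    have hz : (↑m.op⁻¹ : E →L[ℂ] E) x = 0 :=
      m.eq_zero_of_shiftOp_eq_smul hs1 (by rw [hopx]; exact hx')
    rw [← hopx, hz, map_zero]

end Complete

variable [FiniteDimensional ℂ E] [CompleteSpace E] (m : HankelModel E)

theorem hasSum_norm_inner_observer_sq (x : E) :
    HasSum (fun n => ‖⟪m.vec, m.observer n x⟫_ℂ‖ ^ 2) (‖x‖ ^ 2) := by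
  rw [hasSum_iff_tendsto_nat_of_nonneg fun _ => sq_nonneg _]
  have hpartial (n : ℕ) : ∑ k ∈ Finset.range n, ‖⟪m.vec, m.observer k x⟫_ℂ‖ ^ 2
      = ‖x‖ ^ 2 - ‖(m.transition ^ n) x‖ ^ 2 := by
    induction n with
    | zero => simp
    | succ n ih =>
      rw [Finset.sum_range_succ, ih, pow_succ' m.transition, mul_apply_eq_comp, observer,
        mul_apply_eq_comp]
      linarith [m.norm_sq_eq_norm_transition_sq_add ((m.transition ^ n) x)]
  have hlim : Tendsto (fun n => (m.transition ^ n) x) atTop (𝓝 0) := by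
    have hpow := tendsto_pow_of_forall_hasEigenvalue_norm_lt_one fun _ =>
      m.norm_lt_one_of_hasEigenvalue_transition
    exact map_zero (ContinuousLinearMap.apply ℂ E x) ▸
      ((ContinuousLinearMap.apply ℂ E x).continuous.tendsto 0).comp hpow
  simpa only [hpartial, norm_zero, ne_eq, OfNat.ofNat_ne_zero, not_false_eq_true, zero_pow,
    sub_zero] using (hlim.norm.pow 2).const_sub (‖x‖ ^ 2)

/-- The observability isometry `x ↦ (⟪vec, observer n x⟫)ₙ` into `ℓ²`. -/
def observability : E →ₗᵢ[ℂ] L2 where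
  toFun x := ⟨fun n => ⟪m.vec, m.observer n x⟫_ℂ, memℓp_gen <| by
    simpa using (m.hasSum_norm_inner_observer_sq x).summable⟩
  map_add' x y := lp.ext (funext fun n => by
    simp only [map_add, inner_add_right]
    rfl)
  map_smul' s x := lp.ext (funext fun n => by
    simp only [map_smul, inner_smul_right]
    rfl)
  norm_map' x := by
    rw [← sq_eq_sq₀ (norm_nonneg _) (norm_nonneg _)]
    refine (hasSum_norm_inner_sq stdBasis _).unique ?_
    simp only [inner_stdBasis]
    exact m.hasSum_norm_inner_observer_sq x

/-- The operator on `ℓ²` that acts as `D` on the range of the observability isometry and as `0` on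
its orthogonal complement. -/
def lift (D : E →L[ℂ] E) : L2 →L[ℂ] L2 :=
  m.observability.toContinuousLinearMap ∘L D ∘L adjoint m.observability.toContinuousLinearMap

theorem adjoint_observability_stdBasis (n : ℕ) :
    adjoint m.observability.toContinuousLinearMap (stdBasis n) = m.observer n m.vec := by
  refine ext_inner_right ℂ fun x => ?_
  rw [adjoint_inner_left, inner_stdBasis, ← adjoint_inner_right,
    (m.isSelfAdjoint_observer n).adjoint_eq]
  rfl

theorem inner_stdBasis_lift_stdBasis (D : E →L[ℂ] E) (n p : ℕ) :
    ⟪stdBasis n, m.lift D (stdBasis p)⟫_ℂ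
      = ⟪m.vec, (m.observer n * (D * m.observer p)) m.vec⟫_ℂ := by
  simp only [lift, ContinuousLinearMap.comp_apply, mul_apply_eq_comp, ← adjoint_inner_left,
    adjoint_observability_stdBasis, (m.isSelfAdjoint_observer n).adjoint_eq]

theorem isHankelOp_lift_op : IsHankelOp m.symbol (m.lift m.op) :=
  isHankelOp_iff.mpr fun n p => by
    rw [inner_stdBasis_lift_stdBasis, observer_mul_op_mul_observer, symbol]

theorem isHankelOp_lift_shiftOp : IsHankelOp (shiftSeq m.symbol) (m.lift m.shiftOp) :=
  isHankelOp_iff.mpr fun n p => by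
    rw [inner_stdBasis_lift_stdBasis, observer_mul_shiftOp_mul_observer, shiftSeq, symbol]

theorem opT_lift {D : E →L[ℂ] E} (hD : IsSelfAdjoint D) : opT (m.lift D) = m.lift (D * D) := by
  have hobs : adjoint m.observability.toContinuousLinearMap ∘L
      m.observability.toContinuousLinearMap = 1 :=
    m.observability.adjoint_comp_self
  ext1 x
  simp only [opT, lift, adjoint_comp, adjoint_adjoint, hD.adjoint_eq,
    ContinuousLinearMap.comp_apply, mul_apply_eq_comp]
  rw [← ContinuousLinearMap.comp_apply (adjoint _), hobs, one_apply_eq_self]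

theorem lift_diagOp {ι : Type*} [Fintype ι] (f : ι → E) (t : ι → ℝ) :
    m.lift (diagOp f t) = diagOp (m.observability ∘ f) t := by
  ext1 x
  simp [lift, diagOp_apply, adjoint_inner_right]

theorem opT_lift_of_mul_self_eq_diagOp {ι : Type*} [Fintype ι] {f : ι → E} {t : ι → ℝ}
    {D : E →L[ℂ] E} (hD : IsSelfAdjoint D) (h : D * D = diagOp f t) :
    opT (m.lift D) = diagOp (m.observability ∘ f) t := by
  rw [m.opT_lift hD, h, lift_diagOp]

end HankelModel

end HankelModels

section ModelOfInterlacing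

variable {N : ℕ} {a b : Fin N → ℝ}

theorem Interlacing.exists_hankelModel (hab : Interlacing a b) :
    ∃ (m : HankelModel (EuclideanSpace ℂ (Fin N))) (f g : Fin N → EuclideanSpace ℂ (Fin N)),
      Orthonormal ℂ f ∧ Orthonormal ℂ g ∧
      (m.op * m.op : _ →L[ℂ] _) = diagOp f a ∧ m.shiftOp * m.shiftOp = diagOp g b := by
  let e := EuclideanSpace.basisFun (Fin N) ℂ
  obtain ⟨x, hx⟩ : ∃ x, x = ∑ j, (√(residueWeight a b j) : ℂ) • e j := ⟨_, rfl⟩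
  obtain ⟨g, hg, hfg⟩ := hab.exists_diagOp_eq_add_rankOne e.orthonormal hx
  have hop := diagOp_sqrt_mul_self e.orthonormal fun j => (hab.pos_left j).le
  have hshift := diagOp_sqrt_mul_self hg fun j => (hab.pos_right j).le
  have hsqrt : Function.Injective fun j => √(a j) := fun j k hjk =>
    hab.strictAnti_left.injective
      ((Real.sqrt_inj (hab.pos_left j).le (hab.pos_left k).le).mp hjk)
  have hcoord (j : Fin N) : ⟪e j, x⟫_ℂ ≠ 0 := by
    rw [hx, e.orthonormal.inner_right_fintype]
    exact Complex.ofReal_ne_zero.mpr (Real.sqrt_pos.mpr (hab.residueWeight_pos j)).ne'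
  refine ⟨⟨diagOpSqrtUnit e hab.pos_left, diagOp g fun j => √(b j), x,
    ContinuousLinearMap.isSelfAdjoint_iff_isSymmetric.mpr (isSymmetric_diagOp _ _),
    ContinuousLinearMap.isSelfAdjoint_iff_isSymmetric.mpr (isSymmetric_diagOp _ _),
    hop.trans (hfg.trans (by rw [hshift])),
    fun z => eq_zero_of_forall_inner_diagOp_pow_eq_zero e hsqrt hcoord⟩,
    e, g, e.orthonormal, hg, hop, hshift⟩

theorem Interlacing.exists_hasSimpleSVals (hab : Interlacing a b) :
    ∃ (c : ℕ → ℂ) (Γ Γt : L2 →L[ℂ] L2), InH12 c ∧ IsHankelOp c Γ ∧ IsHankelOp (shiftSeq c) Γt ∧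
      HasSimpleSVals Γ N (fun j => √(a j)) ∧ HasSimpleSVals Γt N (fun j => √(b j)) := by
  obtain ⟨m, f, g, hf, hg, hop, hshift⟩ := hab.exists_hankelModel
  have hΓ := m.opT_lift_of_mul_self_eq_diagOp m.isSelfAdjoint_op hop
  have hΓt := m.opT_lift_of_mul_self_eq_diagOp m.isSelfAdjoint_shiftOp hshift
  have hf' := hf.comp_linearIsometry m.observability
  have hg' := hg.comp_linearIsometry m.observability
  refine ⟨m.symbol, m.lift m.op, m.lift m.shiftOp, ⟨?_, ?_⟩, m.isHankelOp_lift_op,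
    m.isHankelOp_lift_shiftOp,
    .of_opT_eq_diagOp hab.strictAnti_left.injective hab.pos_left hf' hΓ,
    .of_opT_eq_diagOp hab.strictAnti_right.injective hab.pos_right hg' hΓt⟩
  · rw [← funext m.isHankelOp_lift_op.apply_e0]
    exact lp.memℓp _
  · exact (m.isHankelOp_lift_shiftOp.hasSum_of_opT_eq_diagOp hg' hΓt).summable

end ModelOfInterlacing

section Constraints

variable {N : ℕ} {I L : Fin N → ℝ}

theorem interlacing_half (h1 : ∀ j, L j < I j)
    (h2 : ∀ j k : Fin N, (j : ℕ) + 1 = (k : ℕ) → I k < L j) (h3 : ∀ j, 0 < L j) :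
    Interlacing (fun j => I j / 2) (fun j => L j / 2) where
  lt j := by linarith [h1 j]
  succ_lt j k hjk := by linarith [h2 j k hjk]
  pos_right j := by linarith [h3 j]

theorem sum_half_pow_eq_sum_residueWeight (hI : ∀ j, I j ≠ 0) (n : ℕ) :
    ∑ j, (I j / 2) ^ (n + 1) * (1 - L j / I j) *
        ∏ k ∈ Finset.univ.erase j, (L k - I j) / (I k - I j) =
      ∑ j, residueWeight (fun j => I j / 2) (fun j => L j / 2) j * (I j / 2) ^ n := by
  refine Finset.sum_congr rfl fun j _ => ?_
  have hprod : ∏ k ∈ Finset.univ.erase j, (L k / 2 - I j / 2) / (I k / 2 - I j / 2)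
      = ∏ k ∈ Finset.univ.erase j, (L k - I j) / (I k - I j) :=
    Finset.prod_congr rfl fun k _ => by
      rw [← sub_div, ← sub_div, div_div_div_cancel_right₀ two_ne_zero]
  rw [residueWeight_eq_mul_prod_erase, hprod, pow_succ]
  have := hI j
  field_simp

theorem IsHankelOp.forall_inner_opT_pow_iff_moments {c : ℕ → ℂ} {Γ : L2 →L[ℂ] L2}
    (h : IsHankelOp c Γ) (hI : ∀ j, I j ≠ 0) :
    (∀ n : ℕ, 1 ≤ n → n ≤ 2 * N → ⟪e0, (opT Γ ^ n) e0⟫_ℂ =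
        ((∑ j : Fin N, (I j / 2) ^ n * (1 - L j / I j) *
          ∏ k ∈ Finset.univ.erase j, (L k - I j) / (I k - I j) : ℝ) : ℂ)) ↔
      ∀ n < 2 * N, ⟪Γ e0, (opT Γ ^ n) (Γ e0)⟫_ℂ =
        ((∑ j, residueWeight (fun j => I j / 2) (fun j => L j / 2) j * (I j / 2) ^ n : ℝ) : ℂ) := by
  simp only [← h.inner_opT_pow_succ, ← sum_half_pow_eq_sum_residueWeight hI]
  refine ⟨fun hn n hnN => hn (n + 1) n.succ_pos hnN, fun hn n h1n hnN => ?_⟩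
  obtain ⟨n, rfl⟩ := Nat.exists_eq_succ_of_ne_zero (Nat.one_le_iff_ne_zero.mp h1n)
  exact hn n hnN

end Constraints

/-- Variational characterization of the invariant torus: with the constraints
`J_{2n}(c) = j_{2n}`, `n = 1, …, 2N`, the functional `M(c) = Σ n|c_n|²` attains its infimum,
the minimum value is `Σ_m L_m/2`, and the set of minimizers is exactly the torus of those
`c` whose Hankel operators `Γ_c`, `Γ̃_c` have rank `N` with simple positive singular values
`√(I_j/2)` and `√(L_m/2)` respectively. -/
theorem statement12 (N : ℕ) (hN : 1 ≤ N) (I L : Fin N → ℝ)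
    (h1 : ∀ j : Fin N, L j < I j)
    (h2 : ∀ j k : Fin N, (j : ℕ) + 1 = (k : ℕ) → I k < L j)
    (h3 : ∀ j : Fin N, 0 < L j) :
    IsLeast
      ((fun c : ℕ → ℂ => ∑' n : ℕ, (n : ℝ) * ‖c n‖ ^ 2) ''
        {c : ℕ → ℂ | InH12 c ∧ ∃ Γ : L2 →L[ℂ] L2, IsHankelOp c Γ ∧
          ∀ n : ℕ, 1 ≤ n → n ≤ 2 * N →
            ⟪e0, ((opT Γ) ^ n) e0⟫_ℂ =
              ((∑ j : Fin N, (I j / 2) ^ n * (1 - L j / I j) *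
                ∏ k ∈ Finset.univ.erase j, (L k - I j) / (I k - I j) : ℝ) : ℂ)})
      (∑ m : Fin N, L m / 2) ∧
    {c : ℕ → ℂ | (InH12 c ∧ ∃ Γ : L2 →L[ℂ] L2, IsHankelOp c Γ ∧
          ∀ n : ℕ, 1 ≤ n → n ≤ 2 * N →
            ⟪e0, ((opT Γ) ^ n) e0⟫_ℂ =
              ((∑ j : Fin N, (I j / 2) ^ n * (1 - L j / I j) *
                ∏ k ∈ Finset.univ.erase j, (L k - I j) / (I k - I j) : ℝ) : ℂ)) ∧
        (∑' n : ℕ, (n : ℝ) * ‖c n‖ ^ 2) = ∑ m : Fin N, L m / 2}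
      = {c : ℕ → ℂ | InH12 c ∧ ∃ Γ Γt : L2 →L[ℂ] L2,
          IsHankelOp c Γ ∧ IsHankelOp (shiftSeq c) Γt ∧
          HasSimpleSVals Γ N (fun j => Real.sqrt (I j / 2)) ∧
          HasSimpleSVals Γt N (fun j => Real.sqrt (L j / 2))} := by
  have hab := interlacing_half h1 h2 h3
  have hI (j : Fin N) : I j ≠ 0 := ((h3 j).trans (h1 j)).ne'
  have : Nonempty (Fin N) := ⟨⟨0, hN⟩⟩
  refine ⟨⟨?_, ?_⟩, Set.ext fun c => ⟨?_, ?_⟩⟩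
  · obtain ⟨c, Γ, Γt, hc, h, ht, hsvals⟩ := hab.exists_hasSimpleSVals
    obtain ⟨hmom, hmin⟩ := (h.hasSimpleSVals_iff hab hc ht).mp hsvals
    exact ⟨c, ⟨hc, Γ, h, (h.forall_inner_opT_pow_iff_moments hI).mpr hmom⟩, hmin⟩
  · rintro _ ⟨c, ⟨hc, Γ, h, hconstr⟩, rfl⟩
    exact h.sum_le_tsum_of_moments hab hc ((h.forall_inner_opT_pow_iff_moments hI).mp hconstr)
  · rintro ⟨⟨hc, Γ, h, hconstr⟩, hmin⟩
    have hmom := (h.forall_inner_opT_pow_iff_moments hI).mp hconstr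
    have ht := h.comp_unilateralShift
    exact ⟨hc, Γ, _, h, ht, (h.hasSimpleSVals_iff hab hc ht).mpr ⟨hmom, hmin⟩⟩
  · rintro ⟨hc, Γ, Γt, h, ht, hsvals⟩
    obtain ⟨hmom, hmin⟩ := (h.hasSimpleSVals_iff hab hc ht).mp hsvals
    exact ⟨⟨hc, Γ, h, (h.forall_inner_opT_pow_iff_moments hI).mpr hmom⟩, hmin⟩

end
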